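/- arXiv:2110.08804 — 2 statements merged into one kernel-verified Lean document; each statement's English description precedes it below -/
import Mathlib

section
/- Let k → A → H → B → k be an exact sequence of cosemisimple Hopf algebras. For right H-comodules V and W there is a natural isomorphism hom^B(V,W) ≅ hom^H(V, W⊗A), where on the left V and W are corestricted to B-comodules along H → B, and W⊗A carries the tensor-product right H-comodule structure (A being a subcomodule algebra of H). -/
/- Common infrastructure: right comodules over coalgebras, simplicity,
cosemisimplicity, subcoalgebras, adjoint coactions, normality, etc. -/

open TensorProduct

universe u

namespace QG

variable (k : Type u) [Field k]

section Coalg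

variable (C : Type u) [AddCommGroup C] [Module k C] [Coalgebra k C]

/-- `ρ : V →ₗ[k] V ⊗[k] C` is a (coassociative, counital) right coaction. -/
structure IsComod {V : Type u} [AddCommGroup V] [Module k V]
    (ρ : V →ₗ[k] V ⊗[k] C) : Prop where
  coassoc : ∀ v : V, ρ.rTensor C (ρ v) =
    (TensorProduct.assoc k V C C).symm.toLinearMap
      ((Coalgebra.comul (R := k) (A := C)).lTensor V (ρ v))
  counit : ∀ v : V, (TensorProduct.rid k V)
      ((Coalgebra.counit (R := k) (A := C)).lTensor V (ρ v)) = v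

/-- A submodule `U ≤ V` is a subcomodule if the coaction restricts to it,
i.e. maps `U` into the image of `U ⊗ C` in `V ⊗ C`. -/
def IsSubcomod {V : Type u} [AddCommGroup V] [Module k V]
    (ρ : V →ₗ[k] V ⊗[k] C) (U : Submodule k V) : Prop :=
  ∀ u ∈ U, ρ u ∈ LinearMap.range ((U.subtype).rTensor C)

/-- A simple subcomodule: a nonzero subcomodule with no nonzero proper
subcomodules below it. -/
def IsSimpleSubcomod {V : Type u} [AddCommGroup V] [Module k V]
    (ρ : V →ₗ[k] V ⊗[k] C) (U : Submodule k V) : Prop :=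
  IsSubcomod k C ρ U ∧ U ≠ ⊥ ∧
    ∀ U' : Submodule k V, U' ≤ U → IsSubcomod k C ρ U' → U' = ⊥ ∨ U' = U

/-- A comodule is simple if it is simple as a subcomodule of itself. -/
def IsSimpleComod {V : Type u} [AddCommGroup V] [Module k V]
    (ρ : V →ₗ[k] V ⊗[k] C) : Prop :=
  IsSimpleSubcomod k C ρ ⊤

/-- Morphisms of right `C`-comodules. -/
def IsComodHom {V W : Type u} [AddCommGroup V] [Module k V]
    [AddCommGroup W] [Module k W]
    (ρV : V →ₗ[k] V ⊗[k] C) (ρW : W →ₗ[k] W ⊗[k] C) (f : V →ₗ[k] W) : Prop :=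
  ρW ∘ₗ f = (f.rTensor C) ∘ₗ ρV

/-- `C` is cosemisimple: every right `C`-comodule is an (internal) direct sum
of simple subcomodules. -/
def IsCosemisimple : Prop :=
  ∀ (V : Type u) [AddCommGroup V] [Module k V]
    (ρ : V →ₗ[k] V ⊗[k] C), IsComod k C ρ →
    ∃ (ι : Type u) (U : ι → Submodule k V),
      (∀ i, IsSimpleSubcomod k C ρ (U i)) ∧
      iSupIndep U ∧ (⨆ i, U i) = ⊤

/-- Subcoalgebras of `C`, as submodules. -/
def IsSubcoalgebra (D : Submodule k C) : Prop :=
  ∀ x ∈ D, Coalgebra.comul (R := k) x ∈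
    LinearMap.range (TensorProduct.map D.subtype D.subtype)

/-- Simple subcoalgebras: nonzero ones with no nonzero proper subcoalgebras. -/
def IsSimpleSubcoalgebra (D : Submodule k C) : Prop :=
  IsSubcoalgebra k C D ∧ D ≠ ⊥ ∧
    ∀ D' : Submodule k C, D' ≤ D → IsSubcoalgebra k C D' → D' = ⊥ ∨ D' = D

/-- The coefficient space of a comodule: the smallest submodule `D ≤ C` such
that the coaction factors through `V ⊗ D`.  For a simple comodule this is its
coefficient coalgebra. -/
def coeffSpace {V : Type u} [AddCommGroup V] [Module k V]
    (ρ : V →ₗ[k] V ⊗[k] C) : Submodule k C :=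
  sInf {D : Submodule k C | ∀ v : V, ρ v ∈ LinearMap.range ((D.subtype).lTensor V)}

/-- Corestriction of a coaction along a linear map of coalgebras `π : C → D`. -/
noncomputable def cores {D : Type u} [AddCommGroup D] [Module k D]
    {V : Type u} [AddCommGroup V] [Module k V]
    (π : C →ₗ[k] D) (ρ : V →ₗ[k] V ⊗[k] C) : V →ₗ[k] V ⊗[k] D :=
  (π.lTensor V) ∘ₗ ρ

end Coalg

section Bialg

variable (H : Type u) [Ring H] [Bialgebra k H]

/-- An invariant vector for a coaction of a bialgebra. -/
def IsInvariant {V : Type u} [AddCommGroup V] [Module k V]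
    (ρ : V →ₗ[k] V ⊗[k] H) (v : V) : Prop :=
  ρ v = v ⊗ₜ[k] (1 : H)

/-- The tensor product coaction on `V ⊗ W` for a bialgebra `H`:
`v ⊗ w ↦ (v₀ ⊗ w₀) ⊗ v₁w₁`. -/
noncomputable def tensorCoact {V W : Type u}
    [AddCommGroup V] [Module k V] [AddCommGroup W] [Module k W]
    (ρV : V →ₗ[k] V ⊗[k] H) (ρW : W →ₗ[k] W ⊗[k] H) :
    (V ⊗[k] W) →ₗ[k] (V ⊗[k] W) ⊗[k] H :=
  ((LinearMap.mul' k H).lTensor (V ⊗[k] W)) ∘ₗ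
    (TensorProduct.tensorTensorTensorComm k V H W H).toLinearMap ∘ₗ
    (TensorProduct.map ρV ρW)

/-- `O(G/H)`: the right coinvariants `{x | (id ⊗ π)Δ(x) = x ⊗ 1}` of a
quotient map `π`. -/
noncomputable def quotientSpaceLeft {B : Type u} [AddCommGroup B] [Module k B] [One B]
    (π : H →ₗ[k] B) : Submodule k H :=
  LinearMap.ker ((π.lTensor H) ∘ₗ (Coalgebra.comul (R := k) (A := H)) -
    (TensorProduct.mk k H B).flip 1)

/-- `O(H\G)`: the left coinvariants `{x | (π ⊗ id)Δ(x) = 1 ⊗ x}`. -/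
noncomputable def quotientSpaceRight {B : Type u} [AddCommGroup B] [Module k B] [One B]
    (π : H →ₗ[k] B) : Submodule k H :=
  LinearMap.ker ((π.rTensor H) ∘ₗ (Coalgebra.comul (R := k) (A := H)) -
    (TensorProduct.mk k B H) 1)

end Bialg

section Hopf

variable (H : Type u) [Ring H] [HopfAlgebra k H]

/-- Iterated comultiplication `x ↦ x₁ ⊗ (x₂ ⊗ x₃)`. -/
noncomputable def comul2 : H →ₗ[k] H ⊗[k] (H ⊗[k] H) :=
  ((Coalgebra.comul (R := k) (A := H)).lTensor H) ∘ₗ (Coalgebra.comul (R := k) (A := H))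

/-- The right adjoint coaction `x ↦ x₂ ⊗ S(x₁)x₃`. -/
noncomputable def adR : H →ₗ[k] H ⊗[k] H :=
  ((LinearMap.mul' k H).lTensor H) ∘ₗ
    (TensorProduct.assoc k H H H).toLinearMap ∘ₗ
    (((TensorProduct.comm k H H).toLinearMap).rTensor H) ∘ₗ
    (TensorProduct.assoc k H H H).symm.toLinearMap ∘ₗ
    ((HopfAlgebra.antipode (R := k) (A := H)).rTensor (H ⊗[k] H)) ∘ₗ
    comul2 k H

/-- The left adjoint coaction `x ↦ x₁S(x₃) ⊗ x₂` (a left coaction, with the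
coacting tensorand on the left). -/
noncomputable def adL : H →ₗ[k] H ⊗[k] H :=
  ((LinearMap.mul' k H).rTensor H) ∘ₗ
    (TensorProduct.assoc k H H H).symm.toLinearMap ∘ₗ
    (((TensorProduct.comm k H H).toLinearMap).lTensor H) ∘ₗ
    (((HopfAlgebra.antipode (R := k) (A := H)).lTensor H).lTensor H) ∘ₗ
    comul2 k H

variable {B : Type u} [AddCommGroup B] [Module k B]

/-- `π : O(G) → O(H)` is right-normal: it is a morphism of right
`O(G)`-comodules for the right adjoint coaction, i.e. the right adjoint
coaction descends along `π`. -/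
def IsRightNormal (π : H →ₗ[k] B) : Prop :=
  ∃ ρ : B →ₗ[k] B ⊗[k] H, ρ ∘ₗ π = (π.rTensor H) ∘ₗ adR k H

/-- `π : O(G) → O(H)` is left-normal: the left adjoint coaction descends
along `π`. -/
def IsLeftNormal (π : H →ₗ[k] B) : Prop :=
  ∃ lam : B →ₗ[k] H ⊗[k] B, lam ∘ₗ π = (π.lTensor H) ∘ₗ adL k H

end Hopf

end QG

namespace QG

variable (k : Type u) [Field k]

section Coalg2

variable (C : Type u) [AddCommGroup C] [Module k C] [Coalgebra k C]

/-- A bundled simple right `C`-comodule. -/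
structure SimpleComodule where
  V : Type u
  [addCommGroup : AddCommGroup V]
  [module : Module k V]
  ρ : V →ₗ[k] V ⊗[k] C
  isComod : IsComod k C ρ
  isSimple : IsSimpleComod k C ρ

attribute [instance] SimpleComodule.addCommGroup SimpleComodule.module

/-- A simple comodule `(T, ρT)` is a constituent of a comodule `(V, ρV)`
(over a cosemisimple coalgebra) iff there is a nonzero comodule map `T → V`. -/
def IsConstituent {T V : Type u} [AddCommGroup T] [Module k T]
    [AddCommGroup V] [Module k V]
    (ρT : T →ₗ[k] T ⊗[k] C) (ρV : V →ₗ[k] V ⊗[k] C) : Prop :=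
  ∃ f : T →ₗ[k] V, f ≠ 0 ∧ IsComodHom k C ρT ρV f

/-- Isomorphism of (simple) comodules. -/
def comodIsoRel (X Y : SimpleComodule k C) : Prop :=
  ∃ e : X.V ≃ₗ[k] Y.V, IsComodHom k C X.ρ Y.ρ e.toLinearMap

/-- The set `Ĉ` of isomorphism classes of simple right `C`-comodules. -/
def SimpleComodQuot := Quot (comodIsoRel k C)

/-- The isomorphism class of a simple comodule. -/
def SimpleComodule.cls (X : SimpleComodule k C) : SimpleComodQuot k C :=
  Quot.mk _ X

/-- Group-like elements of a coalgebra; these correspond to the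
one-dimensional comodules, i.e. to characters. -/
def IsGroupLike (a : C) : Prop :=
  Coalgebra.counit (R := k) (A := C) a = (1 : k) ∧
    Coalgebra.comul (R := k) (A := C) a = a ⊗ₜ[k] a

/-- A linear map `φ : C → Z` out of a coalgebra is central if
`φ(x₁) ⊗ x₂ = φ(x₂) ⊗ x₁`. -/
def IsCentralMap {Z : Type u} [AddCommGroup Z] [Module k Z] (φ : C →ₗ[k] Z) : Prop :=
  (φ.rTensor C) ∘ₗ (Coalgebra.comul (R := k) (A := C)) =
    (φ.rTensor C) ∘ₗ (TensorProduct.comm k C C).toLinearMap ∘ₗ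
      (Coalgebra.comul (R := k) (A := C))

/-- The simple comodule `X` has "central character" `g` with respect to the
quotient map `γ : C → Z`: corestricted along `γ`, the coaction on `X` is a sum
of copies of the character `g`. -/
def HasCentralChar {Z : Type u} [AddCommGroup Z] [Module k Z]
    (γ : C →ₗ[k] Z) (X : SimpleComodule k C) (g : Z) : Prop :=
  ∀ v : X.V, cores k C γ X.ρ v = v ⊗ₜ[k] g

end Coalg2

/-- The k-span of the set of products `g * a`, `a ∈ Am`; for `Am` a submodule
this is the left ideal generated by `Am`. -/
def leftIdealGen {G : Type u} [Ring G] [Module k G] (Am : Submodule k G) :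
    Submodule k G :=
  Submodule.span k {x : G | ∃ g : G, ∃ a ∈ Am, x = g * a}

end QG

namespace QG

variable (k : Type u) [Field k]
variable {H : Type u} [Ring H] [HopfAlgebra k H]
variable {V W : Type u} [AddCommGroup V] [Module k V] [AddCommGroup W] [Module k W]

/-- The canonical map `hom^H(V, W ⊗ H) → hom(V, W)`, `f ↦ (id_W ⊗ ε) ∘ f`;
restricted to maps landing in `W ⊗ A` it implements the adjunction
`hom^B(V, W) ≅ hom^H(V, W ⊗ A)`. -/
noncomputable def counitProj (f : V →ₗ[k] W ⊗[k] H) : V →ₗ[k] W :=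
  (TensorProduct.rid k W).toLinearMap ∘ₗ
    ((Coalgebra.counit (R := k) (A := H)).lTensor W) ∘ₗ f

end QG

namespace QG
section aux
set_option linter.unusedSectionVars false
variable {k : Type u} [Field k]

theorem sep {V C : Type u} [AddCommGroup V] [Module k V] [AddCommGroup C] [Module k C]
    (x : V ⊗[k] C)
    (h : ∀ χ : C →ₗ[k] k, TensorProduct.rid k V (χ.lTensor V x) = 0) : x = 0 := by
  classical
  let b := Module.Basis.ofVectorSpace k C
  apply (TensorProduct.equivFinsuppOfBasisRight (M := V) b).injective
  ext i
  have h1 := h (b.coord i)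
  rw [map_zero, Finsupp.zero_apply, ← h1]
  clear h1 h
  induction x with
  | zero => simp
  | add x y hx hy => simp only [map_add, Finsupp.add_apply, hx, hy]
  | tmul v c => simp

variable {C : Type u} [AddCommGroup C] [Module k C] [Coalgebra k C]
variable {V : Type u} [AddCommGroup V] [Module k V]

noncomputable def op (ρ : V →ₗ[k] V ⊗[k] C) (χ : C →ₗ[k] k) : V →ₗ[k] V :=
  (TensorProduct.rid k V).toLinearMap ∘ₗ χ.lTensor V ∘ₗ ρ

theorem isSubcomod_iff (ρ : V →ₗ[k] V ⊗[k] C) (U : Submodule k V) :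
    IsSubcomod k C ρ U ↔ ∀ (χ : C →ₗ[k] k), ∀ u ∈ U, op ρ χ u ∈ U := by
  constructor
  · intro h χ u hu
    obtain ⟨y, hy⟩ := h u hu
    simp only [op, LinearMap.comp_apply, ← hy]
    clear hy
    induction y with
    | zero => simp
    | add x y hx hy => simp only [map_add]; exact U.add_mem hx hy
    | tmul v c => simp [U.smul_mem]
  · intro h u hu
    have hex : Function.Exact (U.subtype.rTensor C) (U.mkQ.rTensor C) :=
      rTensor_exact C (by
        intro x; simp) (Submodule.mkQ_surjective U)
    refine (hex _).1 ?_
    apply sep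
    intro χ
    have h1 := h χ u hu
    rw [← Submodule.Quotient.mk_eq_zero, ← Submodule.mkQ_apply] at h1
    rw [← h1]
    simp only [op, LinearMap.comp_apply]
    generalize ρ u = y
    induction y with
    | zero => simp
    | add x y hx hy => simp only [map_add, hx, hy]
    | tmul v c => simp

theorem exists_compl (hC : IsCosemisimple k C) (ρ : V →ₗ[k] V ⊗[k] C) (hρ : IsComod k C ρ)
    (L : Submodule k V) (hL : ∀ (χ : C →ₗ[k] k), ∀ u ∈ L, op ρ χ u ∈ L) :
    ∃ N : Submodule k V, (∀ (χ : C →ₗ[k] k), ∀ u ∈ N, op ρ χ u ∈ N) ∧ IsCompl L N := by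
  let S : Subalgebra k (Module.End k V) := Algebra.adjoin k (Set.range (op ρ))
  have key : ∀ U : Submodule k V, (∀ (χ : C →ₗ[k] k), ∀ u ∈ U, op ρ χ u ∈ U) →
      ∀ s ∈ S, ∀ u ∈ U, s u ∈ U := by
    intro U hU s hs
    induction hs using Algebra.adjoin_induction with
    | mem x hx => obtain ⟨χ, rfl⟩ := hx; exact hU χ
    | algebraMap r => intro u hu; simpa using U.smul_mem r hu
    | add x y _ _ hx hy => intro u hu; exact U.add_mem (hx u hu) (hy u hu)
    | mul x y _ _ hx hy => intro u hu; exact hx _ (hy u hu)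
  let toS : ∀ U : Submodule k V, (∀ (χ : C →ₗ[k] k), ∀ u ∈ U, op ρ χ u ∈ U) → Submodule S V :=
    fun U hU => { U with smul_mem' := fun s u hu => key U hU s.1 s.2 u hu }
  have inv : ∀ P : Submodule S V, ∀ (χ : C →ₗ[k] k), ∀ u ∈ P, op ρ χ u ∈ P := by
    intro P χ u hu
    exact P.smul_mem (⟨op ρ χ, Algebra.subset_adjoin ⟨χ, rfl⟩⟩ : S) hu
  obtain ⟨ι, U, hU, -, htop⟩ := hC V ρ hρ
  have hUi : ∀ i, ∀ (χ : C →ₗ[k] k), ∀ u ∈ U i, op ρ χ u ∈ U i := fun i =>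
    (isSubcomod_iff ρ _).1 (hU i).1
  have hss : IsSemisimpleModule S V := by
    have hsim : ∀ i, IsSimpleModule S (toS (U i) (hUi i)) := by
      intro i
      rw [isSimpleModule_iff_isAtom]
      constructor
      · intro h0
        apply (hU i).2.1
        rw [eq_bot_iff]
        intro x hx
        have : x ∈ toS (U i) (hUi i) := hx
        rw [h0] at this
        simpa using this
      · intro P hP
        have hP' : P.restrictScalars k ≤ U i := fun x hx => hP.le hx
        rcases (hU i).2.2 (P.restrictScalars k) hP' ((isSubcomod_iff ρ _).2 (inv P)) with h | h
        · simpa using h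
        · exfalso
          apply hP.ne
          ext x
          have : x ∈ P.restrictScalars k ↔ x ∈ U i := by rw [h]
          exact this
    apply IsSemisimpleModule.of_sSup_simples_eq_top
    rw [eq_top_iff]
    have : (⊤ : Submodule k V) ≤
        (sSup { m : Submodule S V | IsSimpleModule S m }).restrictScalars k := by
      rw [← htop]
      apply iSup_le
      intro i x hx
      have h2 : toS (U i) (hUi i) ≤ sSup { m : Submodule S V | IsSimpleModule S m } :=
        le_sSup (hsim i)
      exact h2 hx
    intro x _
    exact this (Submodule.mem_top)
  obtain ⟨P, hP⟩ := exists_isCompl (toS L hL)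
  refine ⟨P.restrictScalars k, inv P, ?_⟩
  constructor
  · rw [Submodule.disjoint_def]
    intro x hx hx'
    exact Submodule.disjoint_def.1 hP.disjoint x hx hx'
  · rw [codisjoint_iff, eq_top_iff]
    intro x _
    have : x ∈ toS L hL ⊔ P := by rw [hP.sup_eq_top]; trivial
    obtain ⟨a, ha, b, hb, rfl⟩ := Submodule.mem_sup.1 this
    exact Submodule.add_mem_sup ha hb

theorem exists_proj (hC : IsCosemisimple k C) (ρ : V →ₗ[k] V ⊗[k] C) (hρ : IsComod k C ρ)
    (L : Submodule k V) (hL : ∀ (χ : C →ₗ[k] k), ∀ u ∈ L, op ρ χ u ∈ L) :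
    ∃ E : V →ₗ[k] V, (∀ v, E v ∈ L) ∧ (∀ v ∈ L, E v = v) ∧ ∀ v, ρ (E v) = E.rTensor C (ρ v) := by
  obtain ⟨N, hN, hc⟩ := exists_compl hC ρ hρ L hL
  let E := L.subtype ∘ₗ Submodule.projectionOnto L N hc
  have hEL : ∀ v ∈ L, E v = v := fun v hv => by
    have := Submodule.projectionOnto_apply_left hc ⟨v, hv⟩
    exact congrArg Subtype.val this
  have hEN : ∀ v ∈ N, E v = 0 := fun v hv => by
    have := Submodule.projectionOnto_apply_right hc ⟨v, hv⟩
    exact congrArg Subtype.val this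
  refine ⟨E, fun v => by simp [E], hEL, fun v => ?_⟩
  rw [← sub_eq_zero]
  apply sep
  intro χ
  have e1 : E (op ρ χ v) = TensorProduct.rid k V (χ.lTensor V (E.rTensor C (ρ v))) := by
    simp only [op, LinearMap.comp_apply]
    generalize ρ v = y
    induction y with
    | zero => simp
    | add x y hx hy => simp only [map_add, hx, hy]
    | tmul v c => simp
  rw [map_sub, map_sub, ← e1]
  change op ρ χ (E v) - _ = 0
  have : v ∈ L ⊔ N := by rw [hc.sup_eq_top]; trivial
  obtain ⟨a, ha, b, hb, rfl⟩ := Submodule.mem_sup.1 this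
  rw [map_add, map_add, map_add, hEL a ha, hEN b hb, map_add, hEL _ (hL χ a ha), hEN _ (hN χ b hb)]
  simp

end aux
end QG
namespace QG
section aux2
variable {k : Type u} [Field k] {H : Type u} [Ring H] [HopfAlgebra k H]
variable {W : Type u} [AddCommGroup W] [Module k W]
variable {C : Type u} [Ring C] [Algebra k C]

noncomputable def Phi (ρ : W →ₗ[k] W ⊗[k] H) (φ : H →ₗ[k] C) : W ⊗[k] C →ₗ[k] W ⊗[k] C :=
  (LinearMap.mul' k C ∘ₗ φ.rTensor C).lTensor W ∘ₗ
    (TensorProduct.assoc k W H C).toLinearMap ∘ₗ ρ.rTensor C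

theorem Phi_tmul (ρ : W →ₗ[k] W ⊗[k] H) (φ : H →ₗ[k] C) (w : W) (c : C) :
    Phi ρ φ (w ⊗ₜ c) = (LinearMap.mulRight k c ∘ₗ φ).lTensor W (ρ w) := by
  simp only [Phi, LinearMap.comp_apply, LinearMap.rTensor_tmul]
  generalize ρ w = t
  induction t with
  | zero => simp
  | add x y hx hy => simp only [TensorProduct.add_tmul, map_add, hx, hy]
  | tmul v c => simp

theorem Phi_Phi (ρ : W →ₗ[k] W ⊗[k] H) (hρ : IsComod k H ρ) (α β : H →ₗ[k] C)
    (h : ∀ x : H, LinearMap.mul' k C (TensorProduct.map α β (Coalgebra.comul (R := k) x)) =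
      algebraMap k C (Coalgebra.counit (R := k) x)) (y : W ⊗[k] C) :
    Phi ρ α (Phi ρ β y) = y := by
  induction y with
  | zero => simp
  | add x y hx hy => simp only [map_add, hx, hy]
  | tmul w c =>
    rw [Phi_tmul]
    have h1 : ∀ t : W ⊗[k] H, Phi ρ α ((LinearMap.mulRight k c ∘ₗ β).lTensor W t) =
        (LinearMap.mulRight k c ∘ₗ LinearMap.mul' k C ∘ₗ TensorProduct.map α β).lTensor W
          (TensorProduct.assoc k W H H (ρ.rTensor H t)) := by
      intro t
      induction t with
      | zero => simp
      | add x y hx hy => simp only [map_add, hx, hy]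
      | tmul w x =>
        rw [LinearMap.lTensor_tmul, Phi_tmul, LinearMap.rTensor_tmul]
        generalize ρ w = t
        induction t with
        | zero => simp
        | add x y hx hy => simp only [TensorProduct.add_tmul, map_add, hx, hy]
        | tmul v c => simp [mul_assoc]
    rw [h1, hρ.coassoc]
    simp only [LinearEquiv.coe_coe, LinearEquiv.apply_symm_apply]
    rw [← LinearMap.lTensor_comp_apply]
    have h2 : (LinearMap.mulRight k c ∘ₗ LinearMap.mul' k C ∘ₗ TensorProduct.map α β) ∘ₗ
        Coalgebra.comul (R := k) (A := H) =
        LinearMap.toSpanSingleton k C c ∘ₗ Coalgebra.counit (R := k) (A := H) := by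
      ext x
      simp [h, Algebra.smul_def]
    rw [h2]
    have h3 : ∀ t : W ⊗[k] H, (LinearMap.toSpanSingleton k C c ∘ₗ
        Coalgebra.counit (R := k) (A := H)).lTensor W t =
        (TensorProduct.rid k W ((Coalgebra.counit (R := k) (A := H)).lTensor W t)) ⊗ₜ c := by
      intro t
      induction t with
      | zero => simp
      | add x y hx hy => simp only [map_add, hx, hy, TensorProduct.add_tmul]
      | tmul v c => simp [TensorProduct.smul_tmul]
    rw [h3, hρ.counit]

theorem conv_left (φ : H →ₐ[k] C) (x : H) : LinearMap.mul' k C (TensorProduct.map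
      (φ.toLinearMap ∘ₗ HopfAlgebra.antipode k) φ.toLinearMap (Coalgebra.comul (R := k) x)) =
      algebraMap k C (Coalgebra.counit (R := k) x) := by
  rw [← φ.commutes, ← HopfAlgebra.mul_antipode_rTensor_comul_apply (R := k) x]
  generalize Coalgebra.comul (R := k) x = t
  induction t with
  | zero => simp
  | add x y hx hy => simp only [map_add, hx, hy]
  | tmul v c => simp

theorem conv_right (φ : H →ₐ[k] C) (x : H) : LinearMap.mul' k C (TensorProduct.map
      φ.toLinearMap (φ.toLinearMap ∘ₗ HopfAlgebra.antipode k) (Coalgebra.comul (R := k) x)) =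
      algebraMap k C (Coalgebra.counit (R := k) x) := by
  rw [← φ.commutes, ← HopfAlgebra.mul_antipode_lTensor_comul_apply (R := k) x]
  generalize Coalgebra.comul (R := k) x = t
  induction t with
  | zero => simp
  | add x y hx hy => simp only [map_add, hx, hy]
  | tmul v c => simp

theorem Psi_Phi (ρ : W →ₗ[k] W ⊗[k] H) (hρ : IsComod k H ρ) (φ : H →ₐ[k] C) (y : W ⊗[k] C) :
    Phi ρ (φ.toLinearMap ∘ₗ HopfAlgebra.antipode k) (Phi ρ φ.toLinearMap y) = y :=
  Phi_Phi ρ hρ _ _ (conv_left φ) y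

theorem Phi_Psi (ρ : W →ₗ[k] W ⊗[k] H) (hρ : IsComod k H ρ) (φ : H →ₐ[k] C) (y : W ⊗[k] C) :
    Phi ρ φ.toLinearMap (Phi ρ (φ.toLinearMap ∘ₗ HopfAlgebra.antipode k) y) = y :=
  Phi_Phi ρ hρ _ _ (conv_right φ) y

theorem comul_isComod : IsComod k H (Coalgebra.comul (R := k) (A := H)) where
  coassoc v := by
    rw [← Coalgebra.coassoc_apply]; simp
  counit v := by simp

/-- a1 ⊗ a2 S(a3) = a ⊗ 1 -/
theorem key3 (a : H) :
    (LinearMap.mul' k H ∘ₗ (HopfAlgebra.antipode k).lTensor H).lTensor H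
      (TensorProduct.assoc k H H H ((Coalgebra.comul (R := k) (A := H)).rTensor H
        (Coalgebra.comul (R := k) a))) = a ⊗ₜ[k] (1 : H) := by
  rw [Coalgebra.coassoc_apply, ← LinearMap.lTensor_comp_apply]
  have : (LinearMap.mul' k H ∘ₗ (HopfAlgebra.antipode k).lTensor H) ∘ₗ
      (Coalgebra.comul (R := k) (A := H)) = Algebra.linearMap k H ∘ₗ Coalgebra.counit := by
    ext x; simp
  rw [this, LinearMap.lTensor_comp_apply, Coalgebra.lTensor_counit_comul]
  simp

end aux2
end QG
namespace QG
section aux3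
variable {k : Type u} [Field k] {A H : Type u} [Ring H] [HopfAlgebra k H]
  [Ring A] [HopfAlgebra k A]

noncomputable def Gam (ι : A →ₐc[k] H) (G : A →ₗ[k] H →ₗ[k] H) (t : H ⊗[k] H) :
    A ⊗[k] A →ₗ[k] H ⊗[k] H :=
  LinearMap.applyₗ t ∘ₗ TensorProduct.homTensorHomMap (RingHom.id k) H H H H ∘ₗ
    TensorProduct.map G ((LinearMap.mul k H).flip ∘ₗ (ι : A →ₗ[k] H))

theorem Gam_tmul (ι : A →ₐc[k] H) (G : A →ₗ[k] H →ₗ[k] H) (t : H ⊗[k] H) (b c : A) :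
    Gam ι G t (b ⊗ₜ c) = TensorProduct.map (G b) ((LinearMap.mul k H).flip (ι c)) t := by
  simp [Gam]

theorem comul_ι (ι : A →ₐc[k] H) (a : A) : Coalgebra.comul (R := k) (ι a) =
    TensorProduct.map (ι : A →ₗ[k] H) (ι : A →ₗ[k] H) (Coalgebra.comul (R := k) a) :=
  (CoalgHomClass.map_comp_comul_apply ι a).symm

theorem exists_retract (ι : A →ₐc[k] H) (hH : IsCosemisimple k H) :
    ∃ E : H →ₗ[k] H, (∀ h, E h ∈ LinearMap.range (ι : A →ₗ[k] H)) ∧ E 1 = 1 ∧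
      ∀ h a, E (h * ι a) = E h * ι a := by
  have hR : ∀ (χ : H →ₗ[k] k), ∀ u ∈ LinearMap.range (ι : A →ₗ[k] H),
      op (Coalgebra.comul (R := k) (A := H)) χ u ∈ LinearMap.range (ι : A →ₗ[k] H) := by
    rintro χ _ ⟨a, rfl⟩
    change TensorProduct.rid k H (χ.lTensor H (Coalgebra.comul (R := k) (ι a))) ∈ _
    rw [comul_ι]
    generalize Coalgebra.comul (R := k) a = s
    induction s with
    | zero => simp
    | add x y hx hy => simp only [map_add]; exact Submodule.add_mem _ hx hy
    | tmul b c =>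
      simp only [TensorProduct.map_tmul, LinearMap.lTensor_tmul, TensorProduct.rid_tmul]
      exact Submodule.smul_mem _ _ ⟨b, rfl⟩
  obtain ⟨E, hE1, hE2, hE3⟩ := exists_proj hH _ comul_isComod _ hR
  let G : A →ₗ[k] H →ₗ[k] H := LinearMap.mk₂ k (fun a h => E (h * ι a) - E h * ι a)
    (by intros; simp only [map_add, mul_add]; abel)
    (by intros; simp only [map_smul, mul_smul_comm, smul_sub])
    (by intros; simp only [map_add, add_mul]; abel)
    (by intros; simp only [map_smul, smul_mul_assoc, smul_sub])
  have G_apply : ∀ a h, G a h = E (h * ι a) - E h * ι a := fun _ _ => rfl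
  have hG : ∀ a h, Coalgebra.comul (R := k) (G a h) =
      Gam ι G (Coalgebra.comul (R := k) h) (Coalgebra.comul (R := k) a) := by
    intro a h
    rw [G_apply, map_sub, hE3, Bialgebra.comul_mul, Bialgebra.comul_mul, hE3, comul_ι]
    generalize Coalgebra.comul (R := k) a = s
    generalize Coalgebra.comul (R := k) h = t
    induction s with
    | zero => simp
    | add x y hx hy =>
      rw [map_add, map_add, ← hx, ← hy, mul_add, mul_add, map_add]; abel
    | tmul b c =>
      rw [Gam_tmul]
      induction t with
      | zero => simp
      | add x y hx hy =>
        rw [map_add, map_add, ← hx, ← hy, add_mul, add_mul, map_add]; abel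
      | tmul x y => simp [G_apply, TensorProduct.sub_tmul]
  let Ps : H → A ⊗[k] A →ₗ[k] H ⊗[k] H := fun h =>
    LinearMap.mul' k (H ⊗[k] H) ∘ₗ TensorProduct.map
      (Coalgebra.comul (R := k) (A := H) ∘ₗ G.flip h)
      (TensorProduct.mk k H H 1 ∘ₗ (ι : A →ₗ[k] H) ∘ₗ HopfAlgebra.antipode k)
  have Ps_tmul : ∀ h b c, Ps h (b ⊗ₜ c) = Coalgebra.comul (R := k) (G b h) *
      ((1 : H) ⊗ₜ ι (HopfAlgebra.antipode k c)) := by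
    intro h b c; simp [Ps]
  have hPs : ∀ h a, Ps h (Coalgebra.comul (R := k) a) =
      TensorProduct.map (G a) LinearMap.id (Coalgebra.comul (R := k) h) := by
    intro h a
    have h1 : ∀ s : A ⊗[k] A, Ps h s = Gam ι G (Coalgebra.comul (R := k) h)
        ((LinearMap.mul' k A ∘ₗ (HopfAlgebra.antipode k).lTensor A).lTensor A
      (TensorProduct.assoc k A A A ((Coalgebra.comul (R := k) (A := A)).rTensor A s))) := by
      intro s
      induction s with
      | zero => simp
      | add x y hx hy => simp only [map_add, hx, hy]
      | tmul b c =>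
        rw [Ps_tmul, hG, LinearMap.rTensor_tmul]
        generalize Coalgebra.comul (R := k) b = s
        generalize Coalgebra.comul (R := k) h = t
        induction s with
        | zero => simp
        | add x y hx hy => simp only [map_add, add_mul, TensorProduct.add_tmul, hx, hy]
        | tmul x y =>
          simp only [TensorProduct.assoc_tmul, LinearMap.lTensor_tmul, LinearMap.comp_apply,
            LinearMap.mul'_apply, Gam_tmul]
          induction t with
          | zero => simp
          | add x y hx hy => simp only [map_add, add_mul, hx, hy]
          | tmul p q => simp [mul_assoc]
    rw [h1, key3, Gam_tmul]
    congr 2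
    ext; simp
  have hop : ∀ a h χ, G a (op (Coalgebra.comul (R := k) (A := H)) χ h) =
      TensorProduct.rid k H (χ.lTensor H (Ps h (Coalgebra.comul (R := k) a))) := by
    intro a h χ
    rw [hPs]
    simp only [op, LinearMap.comp_apply]
    generalize Coalgebra.comul (R := k) h = t
    induction t with
    | zero => simp
    | add x y hx hy => simp only [map_add, hx, hy]
    | tmul v c => simp
  let L : Submodule k H := ⨅ a : A, LinearMap.ker (G a)
  have memL : ∀ h, h ∈ L ↔ ∀ a, G a h = 0 := by intro h; simp [L]
  have hL : ∀ (χ : H →ₗ[k] k), ∀ u ∈ L, op (Coalgebra.comul (R := k) (A := H)) χ u ∈ L := by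
    intro χ u hu
    rw [memL] at hu ⊢
    intro a
    rw [hop]
    have : Ps u = 0 := by
      ext b c; simp [Ps_tmul, hu]
    rw [this]; simp
  have hRL : ∀ h ∈ LinearMap.range (ι : A →ₗ[k] H), h ∈ L := by
    rintro _ ⟨d, rfl⟩
    rw [memL]
    intro a
    rw [G_apply, hE2 _ ⟨d, rfl⟩, hE2 _ ⟨d * a, by simp⟩, sub_self]
  have hχ : ∀ χ : H →ₗ[k] k, (∀ a, χ (ι a) = 0) → ∀ h,
      op (Coalgebra.comul (R := k) (A := H)) χ h ∈ L := by
    intro χ hχ h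
    rw [memL]
    intro a
    rw [hop]
    generalize Coalgebra.comul (R := k) a = s
    induction s with
    | zero => simp
    | add x y hx hy => simp only [map_add, hx, hy, add_zero]
    | tmul b c =>
      have hmem : G b h ∈ LinearMap.range (ι : A →ₗ[k] H) := by
        rw [G_apply]
        refine Submodule.sub_mem _ (hE1 _) ?_
        obtain ⟨e, he⟩ := hE1 h
        exact ⟨e * b, by rw [← he]; simp⟩
      obtain ⟨d, hd⟩ := hmem
      have hd : ι d = G b h := hd
      rw [Ps_tmul, ← hd, comul_ι]
      generalize Coalgebra.comul (R := k) d = s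
      induction s with
      | zero => simp
      | add x y hx hy => simp only [map_add, add_mul, hx, hy, add_zero]
      | tmul x y => 
        have := hχ (y * HopfAlgebra.antipode k c)
        rw [map_mul] at this
        simp [this]
  have hLtop : ∀ h, h ∈ L := by
    obtain ⟨M, hM, hc⟩ := exists_compl hH _ comul_isComod L hL
    have hM0 : ∀ m ∈ M, m = 0 := by
      intro m hm
      have hd := Submodule.disjoint_def.1 hc.disjoint
      refine hd m (hRL m ?_) hm
      by_contra hn
      obtain ⟨χ, h1, h2⟩ := Submodule.exists_dual_map_eq_bot_of_notMem hn inferInstance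
      apply h1
      have h3 : ∀ a, χ (ι a) = 0 := by
        intro a
        have : χ (ι a) ∈ (LinearMap.range (ι : A →ₗ[k] H)).map χ := ⟨ι a, ⟨a, rfl⟩, rfl⟩
        rw [h2] at this
        simpa using this
      have h4 := hd _ (hχ χ h3 m) (hM χ m hm)
      have h5 : Coalgebra.counit (R := k) (op (Coalgebra.comul (R := k) (A := H)) χ m) = χ m := by
        have : χ m = χ (TensorProduct.lid k H ((Coalgebra.counit (R := k) (A := H)).rTensor H
          (Coalgebra.comul (R := k) m))) := by simp
        rw [this]
        simp only [op, LinearMap.comp_apply]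
        generalize Coalgebra.comul (R := k) m = t
        induction t with
        | zero => simp
        | add x y hx hy => simp only [map_add, hx, hy]
        | tmul v c => simp [mul_comm]
      rw [← h5, h4, map_zero]
    intro h
    have : h ∈ L ⊔ M := by rw [hc.sup_eq_top]; trivial
    obtain ⟨a, ha, b, hb, rfl⟩ := Submodule.mem_sup.1 this
    rw [hM0 b hb, add_zero]; exact ha
  refine ⟨E, hE1, hE2 1 ⟨1, by simp⟩, fun h a => ?_⟩
  have := (memL h).1 (hLtop h) a
  rwa [G_apply, sub_eq_zero] at this

/-- left coinvariants lie in the image of `A` -/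
theorem left_coinv {B : Type u} [Ring B] [HopfAlgebra k B]
    (ι : A →ₐc[k] H) (π : H →ₐc[k] B)
    (hexactB : LinearMap.ker (π : H →ₗ[k] B) =
      leftIdealGen k (LinearMap.range (ι : A →ₗ[k] H) ⊓
        LinearMap.ker (Coalgebra.counit (R := k) (A := H))))
    (hsurj : Function.Surjective π)
    (hH : IsCosemisimple k H) (x : H)
    (hx : (π : H →ₗ[k] B).rTensor H (Coalgebra.comul (R := k) x) = (1 : B) ⊗ₜ x) :
    x ∈ LinearMap.range (ι : A →ₗ[k] H) := by
  obtain ⟨E, hE1, hE2, hE3⟩ := exists_retract ι hH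
  let mE : H ⊗[k] H →ₗ[k] H := LinearMap.mul' k H ∘ₗ E.rTensor H
  let F : H ⊗[k] H →ₗ[k] H ⊗[k] H :=
    Phi (Coalgebra.comul (R := k) (A := H)) (AlgHom.id k H).toLinearMap
  let T : H ⊗[k] H →ₗ[k] H := mE ∘ₗ
    Phi (Coalgebra.comul (R := k) (A := H))
      ((AlgHom.id k H).toLinearMap ∘ₗ HopfAlgebra.antipode k)
  have hTF : ∀ u, T (F u) = mE u := fun u => by
    simp only [T, F, LinearMap.comp_apply]
    rw [Psi_Phi _ comul_isComod]
  have hFs : Function.Surjective F := fun u => ⟨_, Phi_Psi _ comul_isComod (AlgHom.id k H) u⟩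
  -- `P s (y ⊗ z) = y a₁ ⊗ ι S a₂ z`
  let P : A ⊗[k] A →ₗ[k] H ⊗[k] H →ₗ[k] H ⊗[k] H :=
    TensorProduct.homTensorHomMap (RingHom.id k) H H H H ∘ₗ
    TensorProduct.map ((LinearMap.mul k H).flip ∘ₗ (ι : A →ₗ[k] H))
      (LinearMap.mul k H ∘ₗ (ι : A →ₗ[k] H) ∘ₗ HopfAlgebra.antipode k)
  have P_tmul : ∀ b c y z, P (b ⊗ₜ c) (y ⊗ₜ z) =
      (y * ι b) ⊗ₜ (ι (HopfAlgebra.antipode k c) * z) := by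
    intro b c y z; simp [P]
  have hP1 : ∀ a u, mE (P (Coalgebra.comul (R := k) a) u) =
      Coalgebra.counit (R := k) a • mE u := by
    intro a u
    induction u with
    | zero => simp
    | add x y hx hy => simp only [map_add, hx, hy, smul_add]
    | tmul y z =>
      have : Coalgebra.counit (R := k) a • mE (y ⊗ₜ z) =
          E y * ι (algebraMap k A (Coalgebra.counit (R := k) a)) * z := by
        simp [mE, Algebra.algebraMap_eq_smul_one]
      rw [this, ← HopfAlgebra.mul_antipode_lTensor_comul_apply (R := k) a]
      generalize Coalgebra.comul (R := k) a = s
      induction s with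
      | zero => simp
      | add x y hx hy => simp only [map_add, LinearMap.add_apply, hx, hy, mul_add, add_mul]
      | tmul b c =>
        rw [P_tmul]
        simp [mE, hE3, mul_assoc]
  have hP2 : ∀ a u, F (P (Coalgebra.comul (R := k) a) u) =
      (LinearMap.mulRight k (ι a)).rTensor H (F u) := by
    intro a u
    induction u with
    | zero => simp
    | add x y hx hy => simp only [map_add, hx, hy]
    | tmul y z =>
      have h1 : ∀ s : A ⊗[k] A, F (P s (y ⊗ₜ z)) = (LinearMap.mulRight k z).lTensor H
          (Gam ι ((LinearMap.mul k H).flip ∘ₗ (ι : A →ₗ[k] H)) (Coalgebra.comul (R := k) y)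
        ((LinearMap.mul' k A ∘ₗ (HopfAlgebra.antipode k).lTensor A).lTensor A
      (TensorProduct.assoc k A A A ((Coalgebra.comul (R := k) (A := A)).rTensor A s)))) := by
        intro s
        induction s with
        | zero => simp
        | add x y hx hy => simp only [map_add, LinearMap.add_apply, hx, hy]
        | tmul b c =>
          rw [P_tmul, LinearMap.rTensor_tmul]
          simp only [F, Phi_tmul]
          rw [Bialgebra.comul_mul, comul_ι]
          generalize Coalgebra.comul (R := k) b = s
          generalize Coalgebra.comul (R := k) y = t
          induction s with
          | zero => simp
          | add x y hx hy => simp only [map_add, mul_add, TensorProduct.add_tmul, hx, hy]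
          | tmul x y =>
            simp only [TensorProduct.assoc_tmul, LinearMap.lTensor_tmul, LinearMap.comp_apply,
              LinearMap.mul'_apply, Gam_tmul]
            induction t with
            | zero => simp
            | add x y hx hy => simp only [map_add, add_mul, hx, hy]
            | tmul p q => simp [mul_assoc]
      rw [h1, key3, Gam_tmul]
      simp only [F, Phi_tmul]
      generalize Coalgebra.comul (R := k) y = t
      induction t with
      | zero => simp
      | add x y hx hy => simp only [map_add, hx, hy]
      | tmul p q => simp
  have hker : ∀ y ∈ LinearMap.ker (π : H →ₗ[k] B), ∀ z, T (y ⊗ₜ z) = 0 := by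
    intro y hy z
    rw [hexactB, leftIdealGen] at hy
    induction hy using Submodule.span_induction with
    | zero => simp
    | add x y _ _ hx hy => rw [TensorProduct.add_tmul, map_add, hx, hy, add_zero]
    | smul c x _ hx => rw [← TensorProduct.smul_tmul', map_smul, hx, smul_zero]
    | mem x hx =>
      obtain ⟨g, _, ⟨⟨a, rfl⟩, ha⟩, rfl⟩ := hx
      obtain ⟨u, hu⟩ := hFs (g ⊗ₜ z)
      have h1 := hP2 a u
      rw [hu, LinearMap.rTensor_tmul] at h1
      change T ((g * ι a) ⊗ₜ z) = 0
      have ha : Coalgebra.counit (R := k) (ι a) = 0 := ha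
      rw [CoalgHomClass.counit_comp_apply] at ha
      rw [LinearMap.mulRight_apply] at h1
      rw [← h1, hTF, hP1, ha, zero_smul]
  have hT : ∀ u, (π : H →ₗ[k] B).rTensor H u = 0 → T u = 0 := by
    intro u hu
    have hex : Function.Exact ((LinearMap.ker (π : H →ₗ[k] B)).subtype.rTensor H)
        ((π : H →ₗ[k] B).rTensor H) :=
      rTensor_exact H (LinearMap.exact_subtype_ker_map _) hsurj
    obtain ⟨v, rfl⟩ := (hex u).1 hu
    clear hu
    induction v with
    | zero => simp
    | add x y hx hy => simp only [map_add, hx, hy, add_zero]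
    | tmul y z => exact hker _ y.2 _
  have h1 := hT (Coalgebra.comul (R := k) x - 1 ⊗ₜ x) (by
    rw [map_sub, hx]; simp)
  rw [map_sub, sub_eq_zero] at h1
  have h2 : F (x ⊗ₜ 1) = Coalgebra.comul (R := k) x := by
    simp only [F, Phi_tmul]
    have : LinearMap.mulRight k (1 : H) ∘ₗ (AlgHom.id k H).toLinearMap = LinearMap.id := by
      ext; simp
    rw [this]; simp
  have h3 : F (1 ⊗ₜ x) = 1 ⊗ₜ x := by
    simp [F, Phi_tmul, Bialgebra.comul_one, Algebra.TensorProduct.one_def]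
  rw [← h2, ← h3, hTF, hTF] at h1
  have h4 : E x = x := by simpa [mE, hE2] using h1
  rw [← h4]; exact hE1 x

end aux3
end QG
namespace QG
section aux4
variable {k : Type u} [Field k] {A H B : Type u} [Ring H] [HopfAlgebra k H]
  [Ring A] [HopfAlgebra k A] [Ring B] [HopfAlgebra k B]
variable {V W : Type u} [AddCommGroup V] [Module k V] [AddCommGroup W] [Module k W]

theorem tc_tmul (ρ : W →ₗ[k] W ⊗[k] H) (w : W) (h : H) :
    tensorCoact k H ρ (Coalgebra.comul (R := k) (A := H)) (w ⊗ₜ h) =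
    (LinearMap.mul' k H).lTensor (W ⊗[k] H) (TensorProduct.tensorTensorTensorComm k W H H H
      (ρ w ⊗ₜ Coalgebra.comul (R := k) h)) := by
  simp [tensorCoact]

theorem lemA0 (ρ : W →ₗ[k] W ⊗[k] H) (y : W ⊗[k] H) :
    ((TensorProduct.rid k W).toLinearMap ∘ₗ
      (Coalgebra.counit (R := k) (A := H)).lTensor W).rTensor H
      (tensorCoact k H ρ (Coalgebra.comul (R := k) (A := H)) y) =
    Phi ρ (AlgHom.id k H).toLinearMap y := by
  induction y with
  | zero => simp
  | add x y hx hy => simp only [map_add, hx, hy]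
  | tmul w h =>
    rw [tc_tmul, Phi_tmul]
    generalize ρ w = t
    induction t with
    | zero => simp
    | add x y hx hy => simp only [map_add, TensorProduct.add_tmul, hx, hy]
    | tmul w x =>
      have hh : h = TensorProduct.lid k H ((Coalgebra.counit (R := k) (A := H)).rTensor H
          (Coalgebra.comul (R := k) h)) := by simp
      conv_rhs => rw [hh]
      generalize Coalgebra.comul (R := k) h = s
      simp only [LinearMap.lTensor_tmul, LinearMap.comp_apply, LinearMap.mulRight_apply]
      induction s with
      | zero => simp
      | add x y hx hy => simp only [map_add, TensorProduct.tmul_add, mul_add, hx, hy]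
      | tmul p q => simp [TensorProduct.smul_tmul]

theorem lemA (ρV : V →ₗ[k] V ⊗[k] H) (ρW : W →ₗ[k] W ⊗[k] H) (f : V →ₗ[k] W ⊗[k] H)
    (hf : IsComodHom k H ρV (tensorCoact k H ρW (Coalgebra.comul (R := k) (A := H))) f) (v : V) :
    Phi ρW (AlgHom.id k H).toLinearMap (f v) = (counitProj k f).rTensor H (ρV v) := by
  have h1 := LinearMap.congr_fun hf v
  simp only [LinearMap.comp_apply] at h1
  rw [← lemA0, h1, ← LinearMap.rTensor_comp_apply]
  rfl

theorem lemB (ρ : W →ₗ[k] W ⊗[k] H) (hρ : IsComod k H ρ) (y : W ⊗[k] H) :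
    (Phi ρ (AlgHom.id k H).toLinearMap).rTensor H
      (tensorCoact k H ρ (Coalgebra.comul (R := k) (A := H)) y) =
    (TensorProduct.assoc k W H H).symm ((Coalgebra.comul (R := k) (A := H)).lTensor W
      (Phi ρ (AlgHom.id k H).toLinearMap y)) := by
  induction y with
  | zero => simp
  | add x y hx hy => simp only [map_add, hx, hy]
  | tmul w h =>
    rw [tc_tmul, Phi_tmul]
    have h1 : ∀ (t : W ⊗[k] H) (s : H ⊗[k] H), (Phi ρ (AlgHom.id k H).toLinearMap).rTensor H
        ((LinearMap.mul' k H).lTensor (W ⊗[k] H) (TensorProduct.tensorTensorTensorComm k W H H H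
      (t ⊗ₜ s))) = (TensorProduct.assoc k W H H).symm ((LinearMap.mulRight k s).lTensor W
        (TensorProduct.assoc k W H H (ρ.rTensor H t))) := by
      intro t s
      induction t with
      | zero => simp
      | add x y hx hy => simp only [map_add, TensorProduct.add_tmul, hx, hy]
      | tmul w x =>
        induction s with
        | zero =>
          have : LinearMap.mulRight k (0 : H ⊗[k] H) = 0 := by ext; simp
          simp [this]
        | add p q hp hq =>
          have : LinearMap.mulRight k (p + q) =
            LinearMap.mulRight k p + LinearMap.mulRight k q := by
              apply LinearMap.ext; intro; simp [mul_add]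
          rw [this]
          simp only [map_add, TensorProduct.tmul_add, hp, hq, LinearMap.lTensor_add,
            LinearMap.add_apply]
        | tmul p q =>
          simp only [TensorProduct.tensorTensorTensorComm_tmul, LinearMap.lTensor_tmul,
            LinearMap.mul'_apply, LinearMap.rTensor_tmul, Phi_tmul]
          generalize ρ w = t
          induction t with
          | zero => simp
          | add x y hx hy => simp only [map_add, TensorProduct.add_tmul, hx, hy]
          | tmul a b => simp
    rw [h1, hρ.coassoc]
    simp only [LinearEquiv.coe_coe, LinearEquiv.apply_symm_apply]
    rw [← LinearMap.lTensor_comp_apply, ← LinearMap.lTensor_comp_apply]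
    congr 3
    ext x
    simp [Bialgebra.comul_mul]

theorem pi_iota (ι : A →ₐc[k] H) (π : H →ₐc[k] B)
    (hexactB : LinearMap.ker (π : H →ₗ[k] B) =
      leftIdealGen k (LinearMap.range (ι : A →ₗ[k] H) ⊓
        LinearMap.ker (Coalgebra.counit (R := k) (A := H)))) (a : A) :
    π (ι a) = algebraMap k B (Coalgebra.counit (R := k) a) := by
  have h1 : ι a - algebraMap k H (Coalgebra.counit (R := k) a) ∈
      LinearMap.ker (π : H →ₗ[k] B) := by
    rw [hexactB]
    refine Submodule.subset_span ⟨1, _, ⟨⟨a - algebraMap k A (Coalgebra.counit (R := k) a), ?_⟩,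
      ?_⟩, (one_mul _).symm⟩
    · simp [Algebra.algebraMap_eq_smul_one]
    · simp
  have h2 : π (ι a - algebraMap k H (Coalgebra.counit (R := k) a)) = 0 := h1
  rw [map_sub, sub_eq_zero] at h2
  rw [h2]
  simp [Algebra.algebraMap_eq_smul_one]

noncomputable def phi (π : H →ₐc[k] B) : H →ₐ[k] B ⊗[k] H :=
  (Algebra.TensorProduct.map (π : H →ₐ[k] B) (AlgHom.id k H)).comp (Bialgebra.comulAlgHom k H)

theorem phi_lin (π : H →ₐc[k] B) : (phi π).toLinearMap =
    (π : H →ₗ[k] B).rTensor H ∘ₗ Coalgebra.comul (R := k) (A := H) := rfl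

theorem lemC1 (ρ : W →ₗ[k] W ⊗[k] H) (π : H →ₐc[k] B) (y : W ⊗[k] H) :
    Phi ρ (phi π).toLinearMap ((phi π).toLinearMap.lTensor W y) =
    (phi π).toLinearMap.lTensor W (Phi ρ (AlgHom.id k H).toLinearMap y) := by
  induction y with
  | zero => simp
  | add x y hx hy => simp only [map_add, hx, hy]
  | tmul w h =>
    rw [LinearMap.lTensor_tmul, Phi_tmul, Phi_tmul, ← LinearMap.lTensor_comp_apply]
    congr 2
    ext x
    simp

theorem lemC2 (ρ : W →ₗ[k] W ⊗[k] H) (hρ : IsComod k H ρ) (π : H →ₐc[k] B) (y : W ⊗[k] H) :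
    Phi ρ (phi π).toLinearMap ((TensorProduct.mk k B H 1).lTensor W y) =
    TensorProduct.assoc k W B H ((cores k H (π : H →ₗ[k] B) ρ).rTensor H
      (Phi ρ (AlgHom.id k H).toLinearMap y)) := by
  induction y with
  | zero => simp
  | add x y hx hy => simp only [map_add, hx, hy]
  | tmul w h =>
    rw [LinearMap.lTensor_tmul, Phi_tmul, Phi_tmul]
    have h1 : ∀ t : W ⊗[k] H, TensorProduct.assoc k W B H
        ((cores k H (π : H →ₗ[k] B) ρ).rTensor H
          ((LinearMap.mulRight k h ∘ₗ (AlgHom.id k H).toLinearMap).lTensor W t)) =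
        (TensorProduct.map (π : H →ₗ[k] B) (LinearMap.mulRight k h)).lTensor W
          (TensorProduct.assoc k W H H (ρ.rTensor H t)) := by
      intro t
      induction t with
      | zero => simp
      | add x y hx hy => simp only [map_add, hx, hy]
      | tmul w x =>
        simp only [LinearMap.lTensor_tmul, LinearMap.rTensor_tmul, cores, LinearMap.comp_apply]
        generalize ρ w = t
        induction t with
        | zero => simp
        | add x y hx hy => simp only [map_add, TensorProduct.add_tmul, hx, hy]
        | tmul a b => simp
    rw [h1, hρ.coassoc]
    simp only [LinearEquiv.coe_coe, LinearEquiv.apply_symm_apply]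
    rw [← LinearMap.lTensor_comp_apply]
    congr 2
    ext x
    simp only [phi_lin, LinearMap.comp_apply]
    generalize Coalgebra.comul (R := k) x = t
    induction t with
    | zero => simp
    | add x y hx hy => simp only [map_add, hx, hy]
    | tmul a b => simp

theorem lemC3 (ρV : V →ₗ[k] V ⊗[k] H) (π : H →ₐc[k] B) (g : V →ₗ[k] W) (t : V ⊗[k] H) :
    TensorProduct.assoc k W B H ((g.rTensor B ∘ₗ cores k H (π : H →ₗ[k] B) ρV).rTensor H t) =
    g.rTensor (B ⊗[k] H) (((π : H →ₗ[k] B).rTensor H).lTensor V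
      (TensorProduct.assoc k V H H (ρV.rTensor H t))) := by
  induction t with
  | zero => simp
  | add x y hx hy => simp only [map_add, hx, hy]
  | tmul w x =>
    simp only [LinearMap.rTensor_tmul, cores, LinearMap.comp_apply]
    generalize ρV w = t
    induction t with
    | zero => simp
    | add x y hx hy => simp only [map_add, TensorProduct.add_tmul, hx, hy]
    | tmul a b => simp

theorem counit_Psi (ρ : W →ₗ[k] W ⊗[k] H) (hρ : IsComod k H ρ) (y : W ⊗[k] H) :
    TensorProduct.rid k W ((Coalgebra.counit (R := k) (A := H)).lTensor W
      (Phi ρ ((AlgHom.id k H).toLinearMap ∘ₗ HopfAlgebra.antipode k) y)) =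
    TensorProduct.rid k W ((Coalgebra.counit (R := k) (A := H)).lTensor W y) := by
  induction y with
  | zero => simp
  | add x y hx hy => simp only [map_add, hx, hy]
  | tmul w h =>
    rw [Phi_tmul, LinearMap.lTensor_tmul, TensorProduct.rid_tmul]
    conv_rhs => rw [← hρ.counit w]
    generalize ρ w = t
    induction t with
    | zero => simp
    | add x y hx hy => simp only [map_add, hx, hy, smul_add]
    | tmul a b => simp [mul_comm, mul_smul]

end aux4
end QG

open QG in
/-- For an exact sequence `k → A → H → B → k` of cosemisimple
Hopf algebras and right `H`-comodules `V`, `W`, the canonical map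
`f ↦ (id ⊗ ε) ∘ f` is a bijection `hom^H(V, W ⊗ A) ≅ hom^B(V, W)` (a natural
isomorphism); here `W ⊗ A` is realized as the subcomodule `W ⊗ A ⊆ W ⊗ H` of
the tensor-product `H`-comodule `W ⊗ H`. -/
theorem statement_10 (k : Type u) [Field k] [IsAlgClosed k]
    (A H B : Type u) [Ring A] [HopfAlgebra k A] [Ring H] [HopfAlgebra k H]
    [Ring B] [HopfAlgebra k B]
    (ι : A →ₐc[k] H) (π : H →ₐc[k] B)
    (hinj : Function.Injective ι) (hsurj : Function.Surjective π)
    (hexactA : LinearMap.range (ι : A →ₗ[k] H) =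
      quotientSpaceLeft k H (π : H →ₗ[k] B))
    (hexactB : LinearMap.ker (π : H →ₗ[k] B) =
      leftIdealGen k (LinearMap.range (ι : A →ₗ[k] H) ⊓
        LinearMap.ker (Coalgebra.counit (R := k) (A := H))))
    (hcssA : IsCosemisimple k A) (hcssH : IsCosemisimple k H)
    (hcssB : IsCosemisimple k B)
    (V W : Type u) [AddCommGroup V] [Module k V] [AddCommGroup W] [Module k W]
    (ρV : V →ₗ[k] V ⊗[k] H) (ρW : W →ₗ[k] W ⊗[k] H)
    (hV : IsComod k H ρV) (hW : IsComod k H ρW) :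
    (∀ f : V →ₗ[k] W ⊗[k] H,
      IsComodHom k H ρV
        (tensorCoact k H ρW (Coalgebra.comul (R := k) (A := H))) f →
      (∀ v : V, f v ∈ LinearMap.range
        ((LinearMap.range (ι : A →ₗ[k] H)).subtype.lTensor W)) →
      IsComodHom k B (cores k H (π : H →ₗ[k] B) ρV)
        (cores k H (π : H →ₗ[k] B) ρW) (counitProj k f)) ∧
    (∀ g : V →ₗ[k] W,
      IsComodHom k B (cores k H (π : H →ₗ[k] B) ρV)
        (cores k H (π : H →ₗ[k] B) ρW) g →
      ∃! f : V →ₗ[k] W ⊗[k] H,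
        (IsComodHom k H ρV
          (tensorCoact k H ρW (Coalgebra.comul (R := k) (A := H))) f ∧
        ∀ v : V, f v ∈ LinearMap.range
          ((LinearMap.range (ι : A →ₗ[k] H)).subtype.lTensor W)) ∧
        counitProj k f = g) := by
  have hFinj : ∀ (C : Type u) [Ring C] [Algebra k C] (φ : H →ₐ[k] C),
      Function.Injective (Phi ρW φ.toLinearMap) := fun C _ _ φ =>
    Function.LeftInverse.injective (Psi_Phi ρW hW φ)
  refine ⟨?_, ?_⟩
  · intro f hf hfA
    ext v
    have h1 := lemA ρV ρW f hf v
    have h2 : ∀ y ∈ LinearMap.range ((LinearMap.range (ι : A →ₗ[k] H)).subtype.lTensor W),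
        (π : H →ₗ[k] B).lTensor W (Phi ρW (AlgHom.id k H).toLinearMap y) =
        cores k H (π : H →ₗ[k] B) ρW (TensorProduct.rid k W
          ((Coalgebra.counit (R := k) (A := H)).lTensor W y)) := by
      rintro _ ⟨y, rfl⟩
      induction y with
      | zero => simp
      | add x y hx hy => simp only [map_add, hx, hy]
      | tmul w a =>
        obtain ⟨_, a, rfl⟩ := a
        have hpi := pi_iota ι π hexactB a
        simp only [LinearMap.lTensor_tmul, Phi_tmul, TensorProduct.rid_tmul, map_smul, cores,
          LinearMap.comp_apply, Submodule.subtype_apply]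
        generalize ρW w = t
        induction t with
        | zero => simp
        | add x y hx hy => simp only [map_add, hx, hy, smul_add]
        | tmul p q =>
          simp [hpi, Algebra.algebraMap_eq_smul_one]
    have h3 := h2 _ (hfA v)
    rw [h1] at h3
    change cores k H (π : H →ₗ[k] B) ρW (TensorProduct.rid k W
          ((Coalgebra.counit (R := k) (A := H)).lTensor W (f v))) = _
    rw [← h3]
    simp only [cores, LinearMap.comp_apply]
    generalize ρV v = t
    induction t with
    | zero => simp
    | add x y hx hy => simp only [map_add, hx, hy]
    | tmul p q => simp
  · intro g hg
    let f : V →ₗ[k] W ⊗[k] H :=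
      Phi ρW ((AlgHom.id k H).toLinearMap ∘ₗ HopfAlgebra.antipode k) ∘ₗ g.rTensor H ∘ₗ ρV
    have hFf : ∀ v, Phi ρW (AlgHom.id k H).toLinearMap (f v) = g.rTensor H (ρV v) := fun v =>
      Phi_Psi ρW hW (AlgHom.id k H) _
    refine ⟨f, ⟨⟨?_, ?_⟩, ?_⟩, ?_⟩
    · apply LinearMap.ext
      intro v
      have hinj2 : Function.Injective ((Phi ρW (AlgHom.id k H).toLinearMap).rTensor H) := by
        apply Function.LeftInverse.injective
          (g := (Phi ρW ((AlgHom.id k H).toLinearMap ∘ₗ HopfAlgebra.antipode k)).rTensor H)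
        intro y
        rw [← LinearMap.rTensor_comp_apply]
        have : Phi ρW ((AlgHom.id k H).toLinearMap ∘ₗ HopfAlgebra.antipode k) ∘ₗ
            Phi ρW (AlgHom.id k H).toLinearMap = LinearMap.id :=
          LinearMap.ext (Psi_Phi ρW hW (AlgHom.id k H))
        rw [this]; simp
      apply hinj2
      simp only [LinearMap.comp_apply]
      rw [lemB ρW hW, hFf, ← LinearMap.rTensor_comp_apply]
      have : Phi ρW (AlgHom.id k H).toLinearMap ∘ₗ f = g.rTensor H ∘ₗ ρV := LinearMap.ext hFf
      rw [this, LinearMap.rTensor_comp_apply, hV.coassoc]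
      generalize ρV v = t
      induction t with
      | zero => simp
      | add x y hx hy => simp only [map_add, hx, hy]
      | tmul p q =>
        simp only [LinearMap.rTensor_tmul, LinearMap.lTensor_tmul, LinearEquiv.coe_coe]
        generalize Coalgebra.comul (R := k) q = s
        induction s with
        | zero => simp
        | add x y hx hy => simp only [map_add, TensorProduct.tmul_add, hx, hy]
        | tmul p q => simp
    · intro v
      let δ : H →ₗ[k] B ⊗[k] H := (phi π).toLinearMap - TensorProduct.mk k B H 1
      have h1 : δ.lTensor W (f v) = 0 := by
        rw [LinearMap.lTensor_sub, LinearMap.sub_apply, sub_eq_zero]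
        apply hFinj _ (phi π)
        rw [lemC1, lemC2 ρW hW, hFf]
        have hg' : cores k H (π : H →ₗ[k] B) ρW ∘ₗ g =
            g.rTensor B ∘ₗ cores k H (π : H →ₗ[k] B) ρV := hg
        rw [← LinearMap.rTensor_comp_apply, hg', lemC3, hV.coassoc]
        simp only [LinearEquiv.coe_coe, LinearEquiv.apply_symm_apply]
        rw [← LinearMap.lTensor_comp_apply, ← phi_lin]
        generalize ρV v = t
        induction t with
        | zero => simp
        | add x y hx hy => simp only [map_add, hx, hy]
        | tmul p q => simp
      have hex : Function.Exact ((LinearMap.ker δ).subtype.lTensor W) (δ.lTensor W) :=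
        Module.Flat.lTensor_exact W (LinearMap.exact_subtype_ker_map _)
      obtain ⟨z, hz⟩ := (hex _).1 h1
      have hle : LinearMap.ker δ ≤ LinearMap.range (ι : A →ₗ[k] H) := by
        intro x hx
        apply left_coinv ι π hexactB hsurj hcssH
        have : δ x = 0 := hx
        exact sub_eq_zero.1 this
      refine ⟨(Submodule.inclusion hle).lTensor W z, ?_⟩
      rw [← hz, ← LinearMap.lTensor_comp_apply]
      rfl
    · apply LinearMap.ext
      intro v
      change TensorProduct.rid k W ((Coalgebra.counit (R := k) (A := H)).lTensor W (f v)) = _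
      simp only [f, LinearMap.comp_apply]
      rw [counit_Psi ρW hW]
      conv_rhs => rw [← hV.counit v]
      generalize ρV v = t
      induction t with
      | zero => simp
      | add x y hx hy => simp only [map_add, hx, hy]
      | tmul p q => simp
    · rintro f' ⟨⟨hf', -⟩, hg'⟩
      apply LinearMap.ext
      intro v
      apply hFinj H (AlgHom.id k H)
      rw [hFf, lemA ρV ρW f' hf', hg']
end

section
/- Let k → A → H → B → k be an exact sequence of cosemisimple Hopf algebras. Then ∼_B is an equivalence relation on the set B̂ of isomorphism classes of simple right B-comodules, and each of its equivalence classes is finite; the classes are exactly the sets const(U) of simple B-constituents of simple H-comodules U ∈ Ĥ. -/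
/- Common infrastructure: right comodules over coalgebras, simplicity,
cosemisimplicity, subcoalgebras, adjoint coactions, normality, etc. -/

open TensorProduct

universe u

namespace QG

variable (k : Type u) [Field k]
variable {H B : Type u} [Ring H] [HopfAlgebra k H] [Ring B] [HopfAlgebra k B]

/-- `const(U) ⊆ B̂`: the set of isomorphism classes of simple `B`-comodule
constituents of the corestriction of the simple `H`-comodule `U` along `π`. -/
noncomputable def constHat (π : H →ₐc[k] B) (U : SimpleComodule k H) :
    Set (SimpleComodQuot k B) :=
  {x | ∃ X : SimpleComodule k B, X.cls = x ∧
    IsConstituent k B X.ρ (cores k H (π : H →ₗ[k] B) U.ρ)}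

/-- The relation `∼_B` on `B̂`: two simple `B`-comodules are related iff they
are both constituents of (the corestriction of) one and the same simple
`H`-comodule. -/
noncomputable def relSimB (π : H →ₐc[k] B) :
    SimpleComodQuot k B → SimpleComodQuot k B → Prop :=
  fun x y => ∃ U : SimpleComodule k H, x ∈ constHat k π U ∧ y ∈ constHat k π U

/-- The relation `∼_H` on `Ĥ`: nonzero `B`-comodule morphisms exist between
corestrictions, i.e. the corestrictions share a simple constituent. -/
noncomputable def relSimH (π : H →ₐc[k] B) :
    SimpleComodQuot k H → SimpleComodQuot k H → Prop :=
  fun x y => ∃ X Y : SimpleComodule k H, X.cls = x ∧ Y.cls = y ∧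
    ∃ f : X.V →ₗ[k] Y.V, f ≠ 0 ∧
      IsComodHom k B (cores k H (π : H →ₗ[k] B) X.ρ)
        (cores k H (π : H →ₗ[k] B) Y.ρ) f

/-- The map `Ĥ → {finite subsets of B̂}` sending a simple `H`-comodule to its
set of simple `B`-constituents. -/
noncomputable def constMap (π : H →ₐc[k] B) :
    SimpleComodQuot k H → Set (SimpleComodQuot k B) :=
  fun x => {y | ∃ U : SimpleComodule k H, U.cls = x ∧ y ∈ constHat k π U}

end QG

namespace QG

section CoalgAux

set_option linter.unusedSectionVars false

variable {k : Type u} [Field k]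
variable {C : Type u} [AddCommGroup C] [Module k C] [Coalgebra k C]
variable {V W X : Type u} [AddCommGroup V] [Module k V] [AddCommGroup W] [Module k W]
  [AddCommGroup X] [Module k X]

lemma rTensor_inj (M : Type u) [AddCommGroup M] [Module k M] (f : V →ₗ[k] W)
    (hf : Function.Injective f) : Function.Injective (f.rTensor M) :=
  Module.Flat.rTensor_preserves_injective_linearMap f hf

lemma mem_range_ker_rTensor (M : Type u) [AddCommGroup M] [Module k M] (f : V →ₗ[k] W)
    (x : V ⊗[k] M) (hx : f.rTensor M x = 0) :
    x ∈ LinearMap.range ((LinearMap.ker f).subtype.rTensor M) := by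
  have := Module.Flat.rTensor_exact M (LinearMap.exact_subtype_ker_map f)
  exact (this x).1 hx

lemma mem_range_ker_lTensor (M : Type u) [AddCommGroup M] [Module k M] (f : V →ₗ[k] W)
    (x : M ⊗[k] V) (hx : f.lTensor M x = 0) :
    x ∈ LinearMap.range ((LinearMap.ker f).subtype.lTensor M) := by
  have := Module.Flat.lTensor_exact M (LinearMap.exact_subtype_ker_map f)
  exact (this x).1 hx

/-- membership in the image of `U ⊗ M` through the quotient -/
lemma rTensor_mono (M : Type u) [AddCommGroup M] [Module k M] {U U' : Submodule k V}
    (h : U ≤ U') :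
    LinearMap.range (U.subtype.rTensor M) ≤ LinearMap.range (U'.subtype.rTensor M) := by
  have : U.subtype = U'.subtype ∘ₗ Submodule.inclusion h := rfl
  rw [this, LinearMap.rTensor_comp]
  exact LinearMap.range_comp_le_range _ _

lemma hom_apply {ρV : V →ₗ[k] V ⊗[k] C} {ρW : W →ₗ[k] W ⊗[k] C} {f : V →ₗ[k] W}
    (hf : IsComodHom k C ρV ρW f) (v : V) : ρW (f v) = f.rTensor C (ρV v) :=
  LinearMap.congr_fun hf v

lemma IsComodHom.comp' {ρV : V →ₗ[k] V ⊗[k] C} {ρW : W →ₗ[k] W ⊗[k] C}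
    {ρX : X →ₗ[k] X ⊗[k] C} {f : V →ₗ[k] W} {g : W →ₗ[k] X}
    (hg : IsComodHom k C ρW ρX g) (hf : IsComodHom k C ρV ρW f) :
    IsComodHom k C ρV ρX (g ∘ₗ f) := by
  ext v
  simp [hom_apply hg, hom_apply hf, LinearMap.rTensor_comp]

lemma ker_subcomod {ρV : V →ₗ[k] V ⊗[k] C} {ρW : W →ₗ[k] W ⊗[k] C} {f : V →ₗ[k] W}
    (hf : IsComodHom k C ρV ρW f) : IsSubcomod k C ρV (LinearMap.ker f) := by
  intro v hv
  apply mem_range_ker_rTensor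
  rw [← hom_apply hf, LinearMap.mem_ker.1 hv, map_zero]

lemma map_subcomod {ρV : V →ₗ[k] V ⊗[k] C} {ρW : W →ₗ[k] W ⊗[k] C} {f : V →ₗ[k] W}
    (hf : IsComodHom k C ρV ρW f) {U : Submodule k V} (hU : IsSubcomod k C ρV U) :
    IsSubcomod k C ρW (U.map f) := by
  rintro _ ⟨v, hv, rfl⟩
  obtain ⟨t, ht⟩ := hU v hv
  rw [hom_apply hf, ← ht]
  refine ⟨(f.submoduleMap U).rTensor C t, ?_⟩
  rw [← LinearMap.comp_apply, ← LinearMap.comp_apply, ← LinearMap.rTensor_comp,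
    ← LinearMap.rTensor_comp]
  rfl

lemma top_subcomod (ρV : V →ₗ[k] V ⊗[k] C) : IsSubcomod k C ρV ⊤ := by
  intro v _
  have : Function.Surjective ((⊤ : Submodule k V).subtype.rTensor C) :=
    LinearMap.rTensor_surjective _ (fun x => ⟨⟨x, trivial⟩, rfl⟩)
  exact this _

lemma simple_eq_top {ρ : V →ₗ[k] V ⊗[k] C} (h : IsSimpleComod k C ρ) {U : Submodule k V}
    (hU : IsSubcomod k C ρ U) (h0 : U ≠ ⊥) : U = ⊤ :=
  (h.2.2 U le_top hU).resolve_left h0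

/-- Schur -/
lemma schur {ρV : V →ₗ[k] V ⊗[k] C} {ρW : W →ₗ[k] W ⊗[k] C}
    (hV : IsSimpleComod k C ρV) (hW : IsSimpleComod k C ρW) {f : V →ₗ[k] W}
    (hf : IsComodHom k C ρV ρW f) (h0 : f ≠ 0) : Function.Bijective f := by
  constructor
  · rw [← LinearMap.ker_eq_bot]
    by_contra h
    exact h0 (LinearMap.ker_eq_top.1 (simple_eq_top hV (ker_subcomod hf) h))
  · rw [← LinearMap.range_eq_top, LinearMap.range_eq_map]
    refine simple_eq_top hW (map_subcomod hf (top_subcomod _)) ?_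
    rw [← LinearMap.range_eq_map]
    exact fun h => h0 (LinearMap.range_eq_bot.1 h)

lemma symm_hom {ρV : V →ₗ[k] V ⊗[k] C} {ρW : W →ₗ[k] W ⊗[k] C} (e : V ≃ₗ[k] W)
    (he : IsComodHom k C ρV ρW e.toLinearMap) : IsComodHom k C ρW ρV e.symm.toLinearMap := by
  ext w
  obtain ⟨v, rfl⟩ := e.surjective w
  have := hom_apply he v
  simp only [LinearEquiv.coe_coe] at this
  simp only [LinearMap.comp_apply, LinearEquiv.coe_coe, LinearEquiv.symm_apply_apply, this]
  rw [← LinearMap.comp_apply, ← LinearMap.rTensor_comp]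
  simp

lemma exists_restrict {ρ : V →ₗ[k] V ⊗[k] C} {U : Submodule k V} (hU : IsSubcomod k C ρ U) :
    ∃ ρU : U →ₗ[k] U ⊗[k] C, IsComodHom k C ρU ρ U.subtype := by
  have hi := rTensor_inj C U.subtype U.injective_subtype
  refine ⟨(LinearEquiv.ofInjective _ hi).symm.toLinearMap ∘ₗ
    LinearMap.codRestrict _ (ρ ∘ₗ U.subtype) (fun u => hU u u.2), ?_⟩
  refine LinearMap.ext fun u => ?_
  have := congrArg Subtype.val ((LinearEquiv.ofInjective _ hi).apply_symm_apply
    (LinearMap.codRestrict _ (ρ ∘ₗ U.subtype) (fun u => hU u u.2) u))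
  rw [LinearEquiv.ofInjective_apply] at this
  exact this.symm

lemma comod_of_inj {ρV : V →ₗ[k] V ⊗[k] C} {ρW : W →ₗ[k] W ⊗[k] C} {f : V →ₗ[k] W}
    (hf : IsComodHom k C ρV ρW f) (hi : Function.Injective f) (hW : IsComod k C ρW) :
    IsComod k C ρV := by
  constructor
  · intro v
    apply rTensor_inj C _ (rTensor_inj C f hi)
    have h1 := hW.coassoc (f v)
    rw [hom_apply hf] at h1
    rw [← LinearMap.comp_apply, ← LinearMap.rTensor_comp, ← hf, LinearMap.rTensor_comp,
      LinearMap.comp_apply, h1]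
    generalize ρV v = t
    induction t with
    | zero => simp
    | add x y hx hy => simp only [map_add, hx, hy]
    | tmul x c =>
      simp only [LinearMap.rTensor_tmul, LinearMap.lTensor_tmul]
      generalize (Coalgebra.comul (R := k) c) = s
      induction s with
      | zero => simp
      | add x y hx hy => simp only [map_add, tmul_add, hx, hy]
      | tmul x c => simp
  · intro v
    apply hi
    have h1 := hW.counit (f v)
    rw [hom_apply hf] at h1
    rw [← h1]
    generalize ρV v = t
    induction t with
    | zero => simp
    | add x y hx hy => simp only [map_add, hx, hy]
    | tmul x c => simp

lemma simple_restrict {ρ : V →ₗ[k] V ⊗[k] C} {U : Submodule k V}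
    (hU : IsSimpleSubcomod k C ρ U) {ρU : U →ₗ[k] U ⊗[k] C}
    (h : IsComodHom k C ρU ρ U.subtype) : IsSimpleComod k C ρU := by
  refine ⟨top_subcomod _, ?_, ?_⟩
  · intro h'
    apply hU.2.1
    rw [← Submodule.map_subtype_top U, h', Submodule.map_bot]
  · intro U' _ hU'
    rcases hU.2.2 (U'.map U.subtype) (Submodule.map_subtype_le _ _) (map_subcomod h hU') with h1 | h1
    · left
      apply Submodule.map_injective_of_injective U.injective_subtype
      rw [h1, Submodule.map_bot]
    · right
      apply Submodule.map_injective_of_injective U.injective_subtype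
      rw [h1, Submodule.map_subtype_top]

/-- bundle a simple subcomodule -/
lemma exists_bundle {ρ : V →ₗ[k] V ⊗[k] C} (hρ : IsComod k C ρ) {U : Submodule k V}
    (hU : IsSimpleSubcomod k C ρ U) :
    ∃ Y : SimpleComodule k C, ∃ j : Y.V →ₗ[k] V, Function.Injective j ∧
      IsComodHom k C Y.ρ ρ j ∧ LinearMap.range j = U := by
  obtain ⟨ρU, h⟩ := exists_restrict hU.1
  exact ⟨⟨U, ρU, comod_of_inj h U.injective_subtype hρ, simple_restrict hU h⟩, U.subtype,
    U.injective_subtype, h, U.range_subtype⟩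

/-- decomposition into bundled simple comodules with projections -/
lemma exists_decomp (hC : IsCosemisimple k C) {ρ : V →ₗ[k] V ⊗[k] C} (hρ : IsComod k C ρ) :
    ∃ (I : Type u) (Y : I → SimpleComodule k C) (j : ∀ i, (Y i).V →ₗ[k] V)
      (p : ∀ i, V →ₗ[k] (Y i).V),
      (∀ i, IsComodHom k C (Y i).ρ ρ (j i)) ∧ (∀ i, IsComodHom k C ρ (Y i).ρ (p i)) ∧
      (∀ v, (∀ i, p i v = 0) → v = 0) ∧ (⨆ i, LinearMap.range (j i) = ⊤) ∧
      (∀ i, j i ≠ 0) ∧ iSupIndep (fun i => LinearMap.range (j i)) ∧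
      (∀ i, Function.Injective (j i)) := by
  classical
  obtain ⟨I, U, hU, hind, htop⟩ := hC V ρ hρ
  choose Y j hj hjh hr using fun i => exists_bundle hρ (hU i)
  have hint : DirectSum.IsInternal U :=
    (DirectSum.isInternal_submodule_iff_iSupIndep_and_iSup_eq_top U).2 ⟨hind, htop⟩
  let _ := hint.chooseDecomposition
  let e : ∀ i, (Y i).V ≃ₗ[k] U i := fun i =>
    (LinearEquiv.ofInjective (j i) (hj i)).trans (LinearEquiv.ofEq _ _ (hr i))
  have he : ∀ i y, ((e i y : U i) : V) = j i y := fun i y => rfl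
  let p : ∀ i, V →ₗ[k] (Y i).V := fun i =>
    (e i).symm.toLinearMap ∘ₗ DirectSum.component k I (fun i => U i) i ∘ₗ
      (DirectSum.decomposeLinearEquiv U).toLinearMap
  have hp1 : ∀ i, p i ∘ₗ j i = LinearMap.id := by
    intro i
    ext y
    simp only [p, LinearMap.comp_apply, LinearEquiv.coe_coe, ← he,
      DirectSum.decomposeLinearEquiv_apply_coe, LinearMap.id_apply]
    rw [DirectSum.component.lof_self]
    simp
  have hp2 : ∀ i i', i' ≠ i → p i ∘ₗ j i' = 0 := by
    intro i i' hne
    ext y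
    simp only [p, LinearMap.comp_apply, LinearEquiv.coe_coe, ← he,
      DirectSum.decomposeLinearEquiv_apply_coe, LinearMap.zero_apply]
    rw [DirectSum.component.of, dif_neg hne, map_zero]
  refine ⟨I, Y, j, p, hjh, ?_, ?_, ?_, ?_, ?_, hj⟩
  · intro i
    have : ∀ v ∈ ⨆ i, U i, (Y i).ρ (p i v) = (p i).rTensor C (ρ v) := by
      intro v hv
      induction hv using Submodule.iSup_induction' with
      | zero => simp
      | add x y _ _ hx hy => simp only [map_add, hx, hy]
      | mem i' x hx =>
        rw [← hr i'] at hx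
        obtain ⟨y, rfl⟩ := hx
        rw [hom_apply (hjh i'), ← LinearMap.comp_apply (f := (p i).rTensor C),
          ← LinearMap.rTensor_comp, ← LinearMap.comp_apply (f := p i)]
        by_cases h : i' = i
        · subst h
          rw [hp1]; simp
        · rw [hp2 _ _ h]; simp
    refine LinearMap.ext fun v => this v (htop ▸ trivial)
  · intro v hv
    apply (DirectSum.decomposeLinearEquiv U).injective
    rw [map_zero]
    refine DFinsupp.ext fun i => ?_
    have := hv i
    simp only [p, LinearMap.comp_apply, LinearEquiv.coe_coe, LinearEquiv.map_eq_zero_iff] at this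
    exact this
  · simpa only [hr] using htop
  · intro i h
    apply (hU i).2.1
    rw [← hr, h, LinearMap.range_zero]
  · simpa only [hr] using hind

lemma exists_comp_ne {I : Type u} {Y : I → SimpleComodule k C} {j : ∀ i, (Y i).V →ₗ[k] V}
    (h : ⨆ i, LinearMap.range (j i) = ⊤) {g : V →ₗ[k] W} (hg : g ≠ 0) :
    ∃ i, g ∘ₗ j i ≠ 0 := by
  by_contra! hc
  apply hg
  have : ⨆ i, LinearMap.range (j i) ≤ LinearMap.ker g :=
    iSup_le fun i => LinearMap.range_le_ker_iff.2 (hc i)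
  rw [h, top_le_iff] at this
  exact LinearMap.ker_eq_top.1 this

/-- a simple quotient is a constituent -/
lemma const_of_quot (hC : IsCosemisimple k C) {ρ : V →ₗ[k] V ⊗[k] C} (hρ : IsComod k C ρ)
    {ρX : X →ₗ[k] X ⊗[k] C} (hX : IsSimpleComod k C ρX) {g : V →ₗ[k] X}
    (hg : IsComodHom k C ρ ρX g) (h0 : g ≠ 0) : IsConstituent k C ρX ρ := by
  obtain ⟨I, Y, j, p, hj, hp, hsep, htop, hne, -, -⟩ := exists_decomp hC hρ
  obtain ⟨i, hi⟩ := exists_comp_ne htop h0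
  have hh := hg.comp' (hj i)
  have hb := schur (Y i).isSimple hX hh hi
  let e := LinearEquiv.ofBijective _ hb
  refine ⟨j i ∘ₗ e.symm.toLinearMap, ?_, (hj i).comp' (symm_hom e hh)⟩
  intro h
  apply hne i
  ext y
  have := LinearMap.congr_fun h (e y)
  simpa using this

lemma exists_iso_of_const {ρ : V →ₗ[k] V ⊗[k] C}
    {ρX : X →ₗ[k] X ⊗[k] C} (hX : IsSimpleComod k C ρX)
    {I : Type u} {Y : I → SimpleComodule k C} 
    {p : ∀ i, V →ₗ[k] (Y i).V} (hp : ∀ i, IsComodHom k C ρ (Y i).ρ (p i))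
    (hsep : ∀ v, (∀ i, p i v = 0) → v = 0)
    {f : X →ₗ[k] V} (hf : IsComodHom k C ρX ρ f) (h0 : f ≠ 0) :
    ∃ i, ∃ e : X ≃ₗ[k] (Y i).V, IsComodHom k C ρX (Y i).ρ e.toLinearMap ∧
      e.toLinearMap = p i ∘ₗ f := by
  have : ∃ i, p i ∘ₗ f ≠ 0 := by
    by_contra! hc
    apply h0
    ext x
    exact hsep _ fun i => LinearMap.congr_fun (hc i) x
  obtain ⟨i, hi⟩ := this
  have hh := (hp i).comp' hf
  exact ⟨i, LinearEquiv.ofBijective _ (schur hX (Y i).isSimple hh hi), hh, rfl⟩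

/-- a constituent is a quotient -/
lemma quot_of_const (hC : IsCosemisimple k C) {ρ : V →ₗ[k] V ⊗[k] C} (hρ : IsComod k C ρ)
    {ρX : X →ₗ[k] X ⊗[k] C} (hX : IsSimpleComod k C ρX)
    (h : IsConstituent k C ρX ρ) :
    ∃ g : V →ₗ[k] X, IsComodHom k C ρ ρX g ∧ Function.Surjective g := by
  obtain ⟨f, h0, hf⟩ := h
  obtain ⟨I, Y, j, p, hj, hp, hsep, htop, hne, -, -⟩ := exists_decomp hC hρ
  obtain ⟨i, e, he, hep⟩ := exists_iso_of_const hX hp hsep hf h0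
  refine ⟨e.symm.toLinearMap ∘ₗ p i, (symm_hom e he).comp' (hp i), ?_⟩
  intro x
  refine ⟨f x, ?_⟩
  have := LinearMap.congr_fun hep x
  simp only [LinearMap.comp_apply, LinearEquiv.coe_coe] at this ⊢
  rw [← this]; simp

/-- `{v | (g ⊗ id) ρ v = 0}` is a subcomodule -/
lemma largest_subcomod {ρ : V →ₗ[k] V ⊗[k] C} (hρ : IsComod k C ρ) (g : V →ₗ[k] W) :
    IsSubcomod k C ρ (LinearMap.ker (g.rTensor C ∘ₗ ρ)) := by
  intro v hv
  apply mem_range_ker_rTensor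
  rw [LinearMap.rTensor_comp, LinearMap.comp_apply, hρ.coassoc v]
  have h1 : g.rTensor C (ρ v) = 0 := hv
  have h2 : ∀ t : V ⊗[k] C, (g.rTensor C).rTensor C
      ((TensorProduct.assoc k V C C).symm.toLinearMap
        ((Coalgebra.comul (R := k) (A := C)).lTensor V t)) =
      (TensorProduct.assoc k W C C).symm.toLinearMap
        ((Coalgebra.comul (R := k) (A := C)).lTensor W (g.rTensor C t)) := by
    intro t
    induction t with
    | zero => simp
    | add x y hx hy => simp only [map_add, hx, hy]
    | tmul x c =>
      simp only [LinearMap.rTensor_tmul, LinearMap.lTensor_tmul]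
      generalize (Coalgebra.comul (R := k) c) = s
      induction s with
      | zero => simp
      | add x y hx hy => simp only [map_add, tmul_add, hx, hy]
      | tmul x c => simp
  rw [h2, h1, map_zero, map_zero]

lemma eq_zero_of_rTensor {ρ : V →ₗ[k] V ⊗[k] C} (hρ : IsComod k C ρ)
    (hs : IsSimpleComod k C ρ) (g : V →ₗ[k] W) (v : V) (hv : v ≠ 0)
    (h : g.rTensor C (ρ v) = 0) : g = 0 := by
  have htop := simple_eq_top hs (largest_subcomod hρ g) (by
    intro hb
    exact hv ((Submodule.mem_bot k).1 (hb ▸ (LinearMap.mem_ker.2 h))))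
  ext w
  have hw : g.rTensor C (ρ w) = 0 := by
    have : w ∈ LinearMap.ker (g.rTensor C ∘ₗ ρ) := htop ▸ trivial
    exact this
  have h2 : ∀ t : V ⊗[k] C, g (TensorProduct.rid k V
      ((Coalgebra.counit (R := k) (A := C)).lTensor V t)) =
      TensorProduct.rid k W ((Coalgebra.counit (R := k) (A := C)).lTensor W
        (g.rTensor C t)) := by
    intro t
    induction t with
    | zero => simp
    | add x y hx hy => simp only [map_add, hx, hy]
    | tmul x c => simp
  rw [← hρ.counit w, h2, hw]; simp

lemma exists_ne_zero {ρ : V →ₗ[k] V ⊗[k] C} (hs : IsSimpleComod k C ρ) : ∃ v : V, v ≠ 0 := by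
  by_contra! h
  exact hs.2.1 ((Submodule.eq_bot_iff _).2 fun x _ => h x)

lemma simple_finite {ρ : V →ₗ[k] V ⊗[k] C} (hρ : IsComod k C ρ)
    (hs : IsSimpleComod k C ρ) : Module.Finite k V := by
  obtain ⟨v, hv⟩ := exists_ne_zero hs
  obtain ⟨M, hM, h⟩ := TensorProduct.exists_finite_submodule_left_of_setFinite {ρ v}
    (Set.finite_singleton _)
  have h1 : ρ v ∈ LinearMap.range (M.subtype.rTensor C) := h rfl
  have h0 : M.mkQ = 0 := by
    apply eq_zero_of_rTensor hρ hs M.mkQ v hv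
    obtain ⟨t, ht⟩ := h1
    have h2 : M.mkQ ∘ₗ M.subtype = 0 := by ext; simp
    have h3 := LinearMap.congr_fun (LinearMap.rTensor_comp C M.mkQ M.subtype) t
    rw [h2, LinearMap.rTensor_zero, LinearMap.zero_apply, LinearMap.comp_apply, ht] at h3
    exact h3.symm
  have : M = ⊤ := by
    rw [← M.ker_mkQ, h0, LinearMap.ker_zero]
  subst this
  exact Module.Finite.equiv (Submodule.topEquiv (R := k) (M := V))

lemma const_iso_invariant {ρ : V →ₗ[k] V ⊗[k] C} {X Y : SimpleComodule k C}
    (h : comodIsoRel k C X Y) : IsConstituent k C X.ρ ρ ↔ IsConstituent k C Y.ρ ρ := by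
  obtain ⟨e, he⟩ := h
  constructor
  · rintro ⟨f, h0, hf⟩
    refine ⟨f ∘ₗ e.symm.toLinearMap, ?_, hf.comp' (symm_hom e he)⟩
    intro h; apply h0; ext x
    simpa using LinearMap.congr_fun h (e x)
  · rintro ⟨f, h0, hf⟩
    refine ⟨f ∘ₗ e.toLinearMap, ?_, hf.comp' he⟩
    intro h; apply h0; ext x
    simpa using LinearMap.congr_fun h (e.symm x)

lemma const_cls {ρ : V →ₗ[k] V ⊗[k] C} {X Y : SimpleComodule k C}
    (h : X.cls = Y.cls) : IsConstituent k C X.ρ ρ ↔ IsConstituent k C Y.ρ ρ := by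
  let P : SimpleComodQuot k C → Prop := Quot.lift (fun X => IsConstituent k C X.ρ ρ)
    (fun X Y h => propext (const_iso_invariant h))
  have : P X.cls = P Y.cls := by rw [h]
  exact Iff.of_eq this

end CoalgAux

end QG
namespace QG

section HopfAux

variable {k : Type u} [Field k]
variable {H B : Type u} [Ring H] [HopfAlgebra k H] [Ring B] [HopfAlgebra k B]
variable {V W X : Type u} [AddCommGroup V] [Module k V] [AddCommGroup W] [Module k W]
  [AddCommGroup X] [Module k X]

lemma cores_hom (π : H →ₗ[k] B) {ρV : V →ₗ[k] V ⊗[k] H} {ρW : W →ₗ[k] W ⊗[k] H}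
    {f : V →ₗ[k] W} (hf : IsComodHom k H ρV ρW f) :
    IsComodHom k B (cores k H π ρV) (cores k H π ρW) f := by
  refine LinearMap.ext fun v => ?_
  simp only [cores, LinearMap.comp_apply, hom_apply hf]
  generalize ρV v = t
  induction t with
  | zero => simp
  | add x y hx hy => simp only [map_add, hx, hy]
  | tmul x c => simp

lemma cores_comod (π : H →ₐc[k] B) {ρ : V →ₗ[k] V ⊗[k] H} (hρ : IsComod k H ρ) :
    IsComod k B (cores k H (π : H →ₗ[k] B) ρ) := by
  have hΔ : ∀ h : H, Coalgebra.comul (R := k) (π h) =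
      TensorProduct.map (π : H →ₗ[k] B) (π : H →ₗ[k] B) (Coalgebra.comul (R := k) h) :=
    fun h => (CoalgHomClass.map_comp_comul_apply π h).symm
  constructor
  · intro v
    have h1 := congrArg (TensorProduct.map (TensorProduct.map LinearMap.id (π : H →ₗ[k] B))
      (π : H →ₗ[k] B)) (hρ.coassoc v)
    have h2 : ∀ t : V ⊗[k] H, (cores k H (π : H →ₗ[k] B) ρ).rTensor B
        ((π : H →ₗ[k] B).lTensor V t) =
        TensorProduct.map (TensorProduct.map LinearMap.id (π : H →ₗ[k] B))
          (π : H →ₗ[k] B) (ρ.rTensor H t) := by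
      intro t
      induction t with
      | zero => simp
      | add x y hx hy => simp only [map_add, hx, hy]
      | tmul x c => simp [cores, LinearMap.lTensor]
    have h3 : ∀ t : V ⊗[k] H, 
        (TensorProduct.assoc k V B B).symm.toLinearMap
          ((Coalgebra.comul (R := k) (A := B)).lTensor V ((π : H →ₗ[k] B).lTensor V t)) =
        TensorProduct.map (TensorProduct.map LinearMap.id (π : H →ₗ[k] B))
          (π : H →ₗ[k] B) ((TensorProduct.assoc k V H H).symm.toLinearMap
          ((Coalgebra.comul (R := k) (A := H)).lTensor V t)) := by
      intro t
      induction t with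
      | zero => simp
      | add x y hx hy => simp only [map_add, hx, hy]
      | tmul x c =>
        have hc := hΔ c
        simp only [LinearMap.lTensor_tmul]
        have hc' : Coalgebra.comul (R := k) ((π : H →ₗ[k] B) c) = TensorProduct.map (π : H →ₗ[k] B) (π : H →ₗ[k] B) (Coalgebra.comul (R := k) c) := hc
        rw [hc']
        generalize (Coalgebra.comul (R := k) c) = s
        induction s with
        | zero => simp
        | add x y hx hy => simp only [map_add, tmul_add, hx, hy]
        | tmul x c => simp
    have h4 : (cores k H (π : H →ₗ[k] B) ρ) v = (π : H →ₗ[k] B).lTensor V (ρ v) := rfl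
    rw [h4, h2, h1, h3]
  · intro v
    have h4 : (cores k H (π : H →ₗ[k] B) ρ) v = (π : H →ₗ[k] B).lTensor V (ρ v) := rfl
    have hc : (Coalgebra.counit (R := k) (A := B)) ∘ₗ (π : H →ₗ[k] B) =
      Coalgebra.counit (R := k) (A := H) := CoalgHomClass.counit_comp π
    rw [h4, ← LinearMap.comp_apply, ← LinearMap.lTensor_comp, hc]
    exact hρ.counit v

lemma exists_coeff {C : Type u} [AddCommGroup C] [Module k C] [Coalgebra k C]
    {I : Type} [Fintype I] [DecidableEq I] (b : Module.Basis I k V)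
    {ρ : V →ₗ[k] V ⊗[k] C} (hρ : IsComod k C ρ) :
    ∃ c : Matrix I I C, (∀ j, ρ (b j) = ∑ i, b i ⊗ₜ[k] c i j) ∧
      (∀ i j, Coalgebra.comul (R := k) (c i j) = ∑ l, c i l ⊗ₜ[k] c l j) ∧
      (∀ i j, Coalgebra.counit (R := k) (c i j) = if i = j then (1 : k) else 0) := by
  have h : ∀ j, ∃ c : I → C, ρ (b j) = ∑ i, b i ⊗ₜ[k] c i := by
    intro j
    obtain ⟨c, hc⟩ := TensorProduct.eq_repr_basis_left b (ρ (b j))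
    refine ⟨c, ?_⟩
    rw [← hc, Finsupp.sum_fintype]
    simp
  choose c hc using h
  refine ⟨fun i j => c j i, hc, ?_, ?_⟩
  · intro i j
    have h1 := hρ.coassoc (b j)
    rw [hc] at h1
    simp only [map_sum, LinearMap.rTensor_tmul, hc, LinearMap.lTensor_tmul] at h1
    have h2 := congrArg (TensorProduct.assoc k V C C) h1
    simp only [map_sum, sum_tmul, TensorProduct.assoc_tmul, LinearEquiv.coe_coe,
      LinearEquiv.apply_symm_apply] at h2
    have h3 := congrArg (fun t => TensorProduct.equivFinsuppOfBasisLeft b t i) h2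
    simp only [map_sum, Finsupp.finsetSum_apply,
      TensorProduct.equivFinsuppOfBasisLeft_apply_tmul_apply, Module.Basis.repr_self,
      Finsupp.single_apply, ite_smul, one_smul, zero_smul, Finset.sum_ite_eq', 
      Finset.mem_univ, if_true] at h3
    exact h3.symm
  · intro i j
    have h1 := hρ.counit (b j)
    rw [hc] at h1
    simp only [map_sum, LinearMap.lTensor_tmul, TensorProduct.rid_tmul] at h1
    have h3 := congrArg (fun t => b.repr t i) h1
    simp only [map_sum, map_smul, Finsupp.finsetSum_apply, Finsupp.smul_apply,
      Module.Basis.repr_self, Finsupp.single_apply, smul_eq_mul, mul_ite, mul_one, mul_zero,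
      Finset.sum_ite_eq', Finset.mem_univ, if_true] at h3
    rw [h3]
    simp [eq_comm]

lemma antipode_left {I : Type} [Fintype I] [DecidableEq I] {c : Matrix I I H}
    (h1 : ∀ i j, Coalgebra.comul (R := k) (c i j) = ∑ l, c i l ⊗ₜ[k] c l j)
    (h2 : ∀ i j, Coalgebra.counit (R := k) (c i j) = if i = j then (1 : k) else 0) :
    (c.map (HopfAlgebra.antipode k (A := H))) * c = 1 ∧
    c * (c.map (HopfAlgebra.antipode k (A := H))) = 1 := by
  constructor
  · ext i j
    have := HopfAlgebra.mul_antipode_rTensor_comul_apply (R := k) (c i j)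
    rw [h1, h2] at this
    simp only [map_sum, LinearMap.rTensor_tmul, LinearMap.mul'_apply] at this
    rw [Matrix.mul_apply, Matrix.one_apply]
    simp only [Matrix.map_apply, this]
    split_ifs <;> simp
  · ext i j
    have := HopfAlgebra.mul_antipode_lTensor_comul_apply (R := k) (c i j)
    rw [h1, h2] at this
    simp only [map_sum, LinearMap.lTensor_tmul, LinearMap.mul'_apply] at this
    rw [Matrix.mul_apply, Matrix.one_apply]
    simp only [Matrix.map_apply, this]
    split_ifs <;> simp

end HopfAux

end QG
namespace QG

section KeyAux

variable {k : Type u} [Field k]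
variable {A H B : Type u} [Ring A] [HopfAlgebra k A] [Ring H] [HopfAlgebra k H]
  [Ring B] [HopfAlgebra k B]
variable {V W X : Type u} [AddCommGroup V] [Module k V] [AddCommGroup W] [Module k W]
  [AddCommGroup X] [Module k X]

lemma coinv_left (ι : A →ₐc[k] H) (π : H →ₐc[k] B)
    (hexactA : LinearMap.range (ι : A →ₗ[k] H) =
      quotientSpaceLeft k H (π : H →ₗ[k] B)) (x : H)
    (hx : (π : H →ₗ[k] B).lTensor H (Coalgebra.comul (R := k) x) = x ⊗ₜ[k] (1 : B)) :
    (π : H →ₗ[k] B).rTensor H (Coalgebra.comul (R := k) x) = (1 : B) ⊗ₜ[k] x := by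
  have hmem : ∀ y : H, y ∈ quotientSpaceLeft k H (π : H →ₗ[k] B) ↔
      (π : H →ₗ[k] B).lTensor H (Coalgebra.comul (R := k) y) = y ⊗ₜ[k] (1 : B) := by
    intro y
    rw [quotientSpaceLeft, LinearMap.mem_ker, LinearMap.sub_apply, sub_eq_zero]
    rfl
  have hA : ∀ a : A, (π : H →ₗ[k] B) ((ι : A →ₗ[k] H) a) =
      algebraMap k B (Coalgebra.counit (R := k) a) := by
    intro a
    have h1 : (ι : A →ₗ[k] H) a ∈ quotientSpaceLeft k H (π : H →ₗ[k] B) :=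
      hexactA ▸ ⟨a, rfl⟩
    rw [hmem] at h1
    have h2 := congrArg (fun t => TensorProduct.lid k B
      ((Coalgebra.counit (R := k) (A := H)).rTensor B t)) h1
    have h3 : ∀ t : H ⊗[k] H, TensorProduct.lid k B
      ((Coalgebra.counit (R := k) (A := H)).rTensor B ((π : H →ₗ[k] B).lTensor H t)) =
      (π : H →ₗ[k] B) (TensorProduct.lid k H
        ((Coalgebra.counit (R := k) (A := H)).rTensor H t)) := by
      intro t
      induction t with
      | zero => simp
      | add x y hx hy => simp only [map_add, hx, hy]
      | tmul x c => simp
    simp only [h3, Coalgebra.rTensor_counit_comul, LinearMap.rTensor_tmul,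
      TensorProduct.lid_tmul, one_smul] at h2
    rw [h2, Algebra.algebraMap_eq_smul_one]
    congr 1
    exact CoalgHomClass.counit_comp_apply ι a
  rw [← hmem, ← hexactA] at hx
  obtain ⟨a, rfl⟩ := hx
  have h1 : Coalgebra.comul (R := k) ((ι : A →ₗ[k] H) a) =
      TensorProduct.map (ι : A →ₗ[k] H) (ι : A →ₗ[k] H) (Coalgebra.comul (R := k) a) :=
    (CoalgHomClass.map_comp_comul_apply ι a).symm
  rw [h1]
  have h2 : ∀ t : A ⊗[k] A, (π : H →ₗ[k] B).rTensor H
      (TensorProduct.map (ι : A →ₗ[k] H) (ι : A →ₗ[k] H) t) =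
      (1 : B) ⊗ₜ[k] ((ι : A →ₗ[k] H) (TensorProduct.lid k A
        ((Coalgebra.counit (R := k) (A := A)).rTensor A t))) := by
    intro t
    induction t with
    | zero => simp
    | add x y hx hy => simp only [map_add, hx, hy, tmul_add]
    | tmul x c =>
      simp only [TensorProduct.map_tmul, LinearMap.rTensor_tmul, hA, TensorProduct.lid_tmul,
        map_smul, Algebra.algebraMap_eq_smul_one, TensorProduct.smul_tmul]
  rw [h2, Coalgebra.rTensor_counit_comul]
  simp

lemma matrix_key {I J : Type} [Fintype I] [DecidableEq I] [Fintype J] [DecidableEq J]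
    (π : H →ₐc[k] B)
    (hco : ∀ x : H, 
      (π : H →ₗ[k] B).lTensor H (Coalgebra.comul (R := k) x) = x ⊗ₜ[k] (1 : B) →
      (π : H →ₗ[k] B).rTensor H (Coalgebra.comul (R := k) x) = (1 : B) ⊗ₜ[k] x)
    (c : Matrix I I H) (d : Matrix J J H) (f : Matrix J I k) (ci : Matrix I I H)
    (hc : ∀ i j, Coalgebra.comul (R := k) (c i j) = ∑ l, c i l ⊗ₜ[k] c l j)
    (hd : ∀ i j, Coalgebra.comul (R := k) (d i j) = ∑ l, d i l ⊗ₜ[k] d l j)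
    (hci : ci * c = 1) (hci' : c * ci = 1)
    (hf : (d.map π) * (f.map (algebraMap k B)) = (f.map (algebraMap k B)) * (c.map π)) :
    ∃ x : Matrix J I H, x * c = d * (f.map (algebraMap k H)) ∧
      ∀ a j, ∑ i, π (c i j) ⊗ₜ[k] x a i = ∑ e, π (d a e) ⊗ₜ[k] x e j := by
  let πa : H →ₐ[k] B := (π : H →ₐ[k] B)
  have hfa : (d.map πa) * (f.map (algebraMap k B)) = (f.map (algebraMap k B)) * (c.map πa) := hf
  let δ1 : H →ₐ[k] H ⊗[k] B :=
    (Algebra.TensorProduct.map (AlgHom.id k H) πa).comp (Bialgebra.comulAlgHom k H)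
  let δ2 : H →ₐ[k] B ⊗[k] H :=
    (Algebra.TensorProduct.map πa (AlgHom.id k H)).comp (Bialgebra.comulAlgHom k H)
  let L1 : H →ₐ[k] H ⊗[k] B := Algebra.TensorProduct.includeLeft
  let R1 : B →ₐ[k] H ⊗[k] B := Algebra.TensorProduct.includeRight
  let L2 : B →ₐ[k] B ⊗[k] H := Algebra.TensorProduct.includeLeft
  let R2 : H →ₐ[k] B ⊗[k] H := Algebra.TensorProduct.includeRight
  have e1 : ∀ {K : Type} [Fintype K] [DecidableEq K] (m : Matrix K K H)
      (_ : ∀ i j, Coalgebra.comul (R := k) (m i j) = ∑ l, m i l ⊗ₜ[k] m l j),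
      m.map δ1 = m.map L1 * (m.map πa).map R1 := by
    intro K _ _ m hm
    ext i j
    simp [δ1, L1, R1, hm, Matrix.mul_apply]
  have e2 : ∀ {K : Type} [Fintype K] [DecidableEq K] (m : Matrix K K H)
      (_ : ∀ i j, Coalgebra.comul (R := k) (m i j) = ∑ l, m i l ⊗ₜ[k] m l j),
      m.map δ2 = (m.map πa).map L2 * m.map R2 := by
    intro K _ _ m hm
    ext i j
    simp [δ2, L2, R2, hm, Matrix.mul_apply]
  have ealg : ∀ {R S : Type u} [Ring R] [Algebra k R] [Ring S] [Algebra k S] (φ : R →ₐ[k] S),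
      (f.map (algebraMap k R)).map φ = f.map (algebraMap k S) := by
    intro R S _ _ _ _ φ
    ext i j; simp
  have eone : ∀ {R S : Type u} [Ring R] [Algebra k R] [Ring S] [Algebra k S] (φ : R →ₐ[k] S),
      (1 : Matrix I I R).map φ = 1 := by
    intro R S _ _ _ _ φ
    exact Matrix.map_one _ (map_zero φ) (map_one φ)
  set F := f.map (algebraMap k H) with hF
  set x := d * F * ci with hx
  have hxc : x * c = d * F := by rw [hx, Matrix.mul_assoc, hci, Matrix.mul_one]
  clear_value x
  refine ⟨x, hxc, ?_⟩
  -- right coinvariance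
  have hR : x.map δ1 = x.map L1 := by
    have h1 : (c.map πa).map R1 * ci.map δ1 = ci.map L1 := by
      have a1 : c.map δ1 * ci.map δ1 = 1 := by
        rw [← Matrix.map_mul, hci', eone]
      have a2 : ci.map L1 * c.map L1 = 1 := by
        rw [← Matrix.map_mul, hci, eone]
      rw [e1 c hc, Matrix.mul_assoc] at a1
      calc _ = (ci.map L1 * c.map L1) * ((c.map πa).map R1 * ci.map δ1) := by
            rw [a2, Matrix.one_mul]
        _ = _ := by rw [Matrix.mul_assoc, a1, Matrix.mul_one]
    have h2 : (d.map πa).map R1 * f.map (algebraMap k (H ⊗[k] B)) =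
        f.map (algebraMap k (H ⊗[k] B)) * (c.map πa).map R1 := by
      rw [← ealg R1, ← Matrix.map_mul, hfa, Matrix.map_mul]
    rw [hx, Matrix.map_mul, Matrix.map_mul, e1 d hd, hF, ealg, Matrix.mul_assoc, Matrix.mul_assoc,
      ← Matrix.mul_assoc ((d.map πa).map R1), h2, Matrix.mul_assoc, h1, Matrix.map_mul,
      Matrix.map_mul, ealg, Matrix.mul_assoc]
  have hL : x.map δ2 = x.map R2 := by
    ext a j
    have h := congrFun (congrFun hR a) j
    exact hco (x a j) h
  have hfin : x.map R2 * (c.map πa).map L2 = (d.map πa).map L2 * x.map R2 := by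
    have a1 : x.map δ2 * c.map δ2 = d.map δ2 * f.map (algebraMap k (B ⊗[k] H)) := by
      rw [← Matrix.map_mul, hxc, Matrix.map_mul, hF, ealg]
    rw [hL, e2 c hc, e2 d hd, Matrix.mul_assoc, ← ealg R2, ← hF, ← Matrix.map_mul, ← hxc,
      Matrix.map_mul, ← Matrix.mul_assoc, ← Matrix.mul_assoc] at a1
    have a2 : c.map R2 * ci.map R2 = 1 := by
      rw [← Matrix.map_mul, hci', eone]
    have a3 := congrArg (fun m => m * ci.map R2) a1
    simp only [Matrix.mul_assoc, a2, Matrix.mul_one] at a3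
    exact a3
  intro a j
  have h := congrFun (congrFun hfin a) j
  simp only [Matrix.mul_apply, Matrix.map_apply, L2, R2, 
    Algebra.TensorProduct.includeLeft_apply, Algebra.TensorProduct.includeRight_apply,
    Algebra.TensorProduct.tmul_mul_tmul, one_mul, mul_one] at h
  exact h

lemma key (ι : A →ₐc[k] H) (π : H →ₐc[k] B)
    (hexactA : LinearMap.range (ι : A →ₗ[k] H) =
      quotientSpaceLeft k H (π : H →ₗ[k] B))
    {ρV : V →ₗ[k] V ⊗[k] H} {ρW : W →ₗ[k] W ⊗[k] H} (hV : IsComod k H ρV)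
    (hVs : IsSimpleComod k H ρV)
    (hW : IsComod k H ρW) (hWs : IsSimpleComod k H ρW)
    {f : V →ₗ[k] W} (hf : IsComodHom k B (cores k H (π : H →ₗ[k] B) ρV)
      (cores k H (π : H →ₗ[k] B) ρW) f) (hf0 : f ≠ 0) (γ : W →ₗ[k] k) (hγ : γ ≠ 0) :
    ∃ f' : V →ₗ[k] W, IsComodHom k B (cores k H (π : H →ₗ[k] B) ρV)
      (cores k H (π : H →ₗ[k] B) ρW) f' ∧ γ ∘ₗ f' ≠ 0 := by
  have := simple_finite hV hVs
  have := simple_finite hW hWs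
  let b := Module.finBasis k V
  let b' := Module.finBasis k W
  obtain ⟨c, c1, c2, c3⟩ := exists_coeff b hV
  obtain ⟨d, d1, d2, d3⟩ := exists_coeff b' hW
  obtain ⟨s1, s2⟩ := antipode_left c2 c3
  let F := LinearMap.toMatrix b b' f
  have hfb : ∀ j, f (b j) = ∑ a, F a j • b' a := by
    intro j
    rw [← b'.sum_repr (f (b j))]
    simp [F, LinearMap.toMatrix_apply]
  have hcV : ∀ j, cores k H (π : H →ₗ[k] B) ρV (b j) = ∑ i, b i ⊗ₜ[k] π (c i j) := by
    intro j
    simp [cores, c1]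
  have hcW : ∀ j, cores k H (π : H →ₗ[k] B) ρW (b' j) = ∑ i, b' i ⊗ₜ[k] π (d i j) := by
    intro j
    simp [cores, d1]
  have hF : (d.map π) * (F.map (algebraMap k B)) = (F.map (algebraMap k B)) * (c.map π) := by
    ext a j
    have h1 := hom_apply hf (b j)
    rw [hfb, hcV] at h1
    simp only [map_sum, map_smul, hcW, LinearMap.rTensor_tmul, hfb, sum_tmul] at h1
    have h3 := congrArg (fun t => TensorProduct.equivFinsuppOfBasisLeft b' t a) h1
    simp only [map_sum, map_smul, Finsupp.finsetSum_apply, Finsupp.smul_apply,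
      TensorProduct.equivFinsuppOfBasisLeft_apply_tmul_apply, Module.Basis.repr_self,
      Finsupp.single_apply, ite_smul, one_smul, zero_smul, Finset.sum_ite_eq', 
      Finset.mem_univ, if_true, smul_eq_mul, mul_ite, mul_one, mul_zero] at h3
    simp only [Matrix.mul_apply, Matrix.map_apply, ← Algebra.commutes (_ : k) (_ : B),
      ← Algebra.smul_def]
    exact h3
  obtain ⟨x, hx1, hx2⟩ := matrix_key π (coinv_left ι π hexactA) c d F _ c2 d2 s1 s2 hF
  by_contra! hcon
  apply hγ
  have hφ : ∀ (φ : Module.Dual k H) j, ∑ a, φ (x a j) * γ (b' a) = 0 := by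
    intro φ j
    let f' : V →ₗ[k] W := b.constr k (fun j => ∑ a, φ (x a j) • b' a)
    have hf' : ∀ j, f' (b j) = ∑ a, φ (x a j) • b' a := fun j => b.constr_basis k _ j
    have h := hcon f' ?_
    · have h2 := LinearMap.congr_fun h (b j)
      simpa [hf'] using h2
    · refine b.ext fun j => ?_
      simp only [LinearMap.comp_apply, hf', hcV, map_sum, map_smul, hcW, LinearMap.rTensor_tmul,
        sum_tmul, Finset.smul_sum]
      rw [Finset.sum_comm]
      conv_rhs => rw [Finset.sum_comm]
      refine Finset.sum_congr rfl fun a _ => ?_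
      have h4 := congrArg (fun t => TensorProduct.rid k B (φ.lTensor B t)) (hx2 a j)
      simp only [map_sum, LinearMap.lTensor_tmul, TensorProduct.rid_tmul] at h4
      simp only [TensorProduct.smul_tmul, ← TensorProduct.tmul_smul, ← tmul_sum]
      rw [h4]
  have hy : ∀ j, ∑ a, γ (b' a) • x a j = 0 := by
    intro j
    rw [← Module.forall_dual_apply_eq_zero_iff k]
    intro φ
    rw [← hφ φ j]
    simp [mul_comm]
  have hz : ∀ l, γ.rTensor H (ρW (f (b l))) = 0 := by
    intro l
    have h1 : ∑ a, γ (b' a) • (x * c) a l = 0 := by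
      simp only [Matrix.mul_apply, Finset.smul_sum]
      rw [Finset.sum_comm]
      refine Finset.sum_eq_zero fun i _ => ?_
      have := congrArg (· * c i l) (hy i)
      simpa [Finset.sum_mul] using this
    rw [hx1] at h1
    simp only [Matrix.mul_apply, Matrix.map_apply, ← Algebra.commutes (_ : k) (_ : H),
      ← Algebra.smul_def, Finset.smul_sum] at h1
    apply (TensorProduct.lid k H).injective
    rw [map_zero, ← h1, hfb]
    simp only [map_sum, map_smul, d1, LinearMap.rTensor_tmul, TensorProduct.lid_tmul,
      Finset.smul_sum]
    rw [Finset.sum_comm]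
    refine Finset.sum_congr rfl fun a _ => Finset.sum_congr rfl fun e _ => smul_comm _ _ _
  have hz' : γ.rTensor H ∘ₗ ρW ∘ₗ f = 0 := b.ext fun l => by simpa using hz l
  have : ∃ v, f v ≠ 0 := by
    by_contra! h
    exact hf0 (LinearMap.ext h)
  obtain ⟨v, hv⟩ := this
  exact eq_zero_of_rTensor hW hWs γ (f v) hv (LinearMap.congr_fun hz' v)

end KeyAux

end QG
namespace QG

section FinalAux

variable {k : Type u} [Field k]
variable {A H B : Type u} [Ring A] [HopfAlgebra k A] [Ring H] [HopfAlgebra k H]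
  [Ring B] [HopfAlgebra k B]

lemma comul_comod {C : Type u} [AddCommGroup C] [Module k C] [Coalgebra k C] :
    IsComod k C (Coalgebra.comul (R := k) (A := C)) := by
  constructor
  · intro v
    exact (Coalgebra.coassoc_symm_apply v).symm
  · intro v
    rw [Coalgebra.lTensor_counit_comul]
    simp

lemma exists_over (π : H →ₐc[k] B) (hsurj : Function.Surjective π)
    (hcssH : IsCosemisimple k H) (hcssB : IsCosemisimple k B) (X : SimpleComodule k B) :
    ∃ U : SimpleComodule k H, IsConstituent k B X.ρ (cores k H (π : H →ₗ[k] B) U.ρ) := by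
  obtain ⟨v, hv⟩ := exists_ne_zero X.isSimple
  obtain ⟨φ, hφ⟩ : ∃ φ : Module.Dual k X.V, φ v ≠ 0 := by
    by_contra! h
    exact hv ((Module.forall_dual_apply_eq_zero_iff k v).1 h)
  let cφ : X.V →ₗ[k] B := (TensorProduct.lid k B).toLinearMap ∘ₗ φ.rTensor B ∘ₗ X.ρ
  have hc0 : cφ ≠ 0 := by
    intro h
    apply hφ
    have h1 : φ.rTensor B (X.ρ v) = 0 := by
      apply (TensorProduct.lid k B).injective
      rw [map_zero]
      exact LinearMap.congr_fun h v
    have := eq_zero_of_rTensor X.isComod X.isSimple φ v hv h1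
    rw [this]; rfl
  have hch : IsComodHom k B X.ρ (Coalgebra.comul (R := k) (A := B)) cφ := by
    refine LinearMap.ext fun w => ?_
    have h1 := X.isComod.coassoc w
    have h2 : cφ.rTensor B (X.ρ w) = ((TensorProduct.lid k B).toLinearMap ∘ₗ
      φ.rTensor B).rTensor B (X.ρ.rTensor B (X.ρ w)) := by
      exact LinearMap.congr_fun (LinearMap.rTensor_comp B ((TensorProduct.lid k B).toLinearMap ∘ₗ
        φ.rTensor B) X.ρ) (X.ρ w)
    change Coalgebra.comul (R := k) (cφ w) = cφ.rTensor B (X.ρ w)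
    rw [h2, h1]
    simp only [cφ, LinearMap.comp_apply]
    generalize X.ρ w = t
    induction t with
    | zero => simp
    | add x y hx hy => simp only [map_add, hx, hy]
    | tmul x c =>
      simp only [LinearMap.rTensor_tmul, LinearMap.lTensor_tmul, LinearEquiv.coe_coe,
        TensorProduct.lid_tmul, map_smul]
      generalize (Coalgebra.comul (R := k) c) = s
      induction s with
      | zero => simp
      | add x y hx hy => simp only [map_add, tmul_add, smul_add, hx, hy]
      | tmul x c => simp [TensorProduct.smul_tmul']
  obtain ⟨g, hg, hgs⟩ := quot_of_const hcssB comul_comod X.isSimple ⟨cφ, hc0, hch⟩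
  have hπ : IsComodHom k B (cores k H (π : H →ₗ[k] B) (Coalgebra.comul (R := k) (A := H)))
      (Coalgebra.comul (R := k) (A := B)) (π : H →ₗ[k] B) := by
    refine LinearMap.ext fun h => ?_
    have h1 : Coalgebra.comul (R := k) (π h) =
      TensorProduct.map (π : H →ₗ[k] B) (π : H →ₗ[k] B) (Coalgebra.comul (R := k) h) :=
      (CoalgHomClass.map_comp_comul_apply π h).symm
    refine h1.trans ?_
    simp only [cores, LinearMap.comp_apply]
    generalize Coalgebra.comul (R := k) h = t
    induction t with
    | zero => simp
    | add x y hx hy => simp only [map_add, hx, hy]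
    | tmul x c => simp
  have hgπ := hg.comp' hπ
  have hgπ0 : g ∘ₗ (π : H →ₗ[k] B) ≠ 0 := by
    intro h
    obtain ⟨y, hy⟩ := hgs v
    obtain ⟨z, hz⟩ := hsurj y
    have := LinearMap.congr_fun h z
    have h3 : g (π z) = 0 := this
    rw [hz, hy] at h3
    exact hv h3
  obtain ⟨I, Y, j, p, hj, hp, hsep, htop, hne, -, -⟩ :=
    exists_decomp hcssH (comul_comod (k := k) (C := H))
  obtain ⟨i, hi⟩ := exists_comp_ne htop hgπ0
  exact ⟨Y i, const_of_quot hcssB (cores_comod π (Y i).isComod) X.isSimple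
    (hgπ.comp' (cores_hom _ (hj i))) hi⟩

lemma const_nonempty (π : H →ₐc[k] B) (hcssB : IsCosemisimple k B) (U : SimpleComodule k H) :
    ∃ x, x ∈ constHat k π U := by
  obtain ⟨I, Y, j, p, hj, hp, hsep, htop, hne, -, -⟩ :=
    exists_decomp hcssB (cores_comod π U.isComod)
  obtain ⟨v, hv⟩ := exists_ne_zero U.isSimple
  have : ∃ i, p i v ≠ 0 := by
    by_contra! h
    exact hv (hsep v h)
  obtain ⟨i, -⟩ := this
  exact ⟨(Y i).cls, Y i, rfl, j i, hne i, hj i⟩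

lemma const_finite (π : H →ₐc[k] B) (hcssB : IsCosemisimple k B) (U : SimpleComodule k H) :
    (constHat k π U).Finite := by
  obtain ⟨I, Y, j, p, hj, hp, hsep, htop, hne, hind, -⟩ :=
    exists_decomp hcssB (cores_comod π U.isComod)
  have := simple_finite U.isComod U.isSimple
  have hfin : Finite I := by
    have h := WellFoundedGT.finite_ne_bot_of_iSupIndep hind
    have h2 : {i | LinearMap.range (j i) ≠ ⊥} = Set.univ := by
      ext i
      simp [LinearMap.range_eq_bot, hne i]
    rw [h2] at h
    exact Set.finite_univ_iff.1 h
  refine (Set.finite_range (fun i => (Y i).cls)).subset ?_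
  rintro _ ⟨X, rfl, f, h0, hf⟩
  obtain ⟨i, e, he, -⟩ := exists_iso_of_const X.isSimple hp hsep hf h0
  exact ⟨i, (Quot.sound ⟨e, he⟩ : X.cls = (Y i).cls).symm⟩

lemma const_subset (ι : A →ₐc[k] H) (π : H →ₐc[k] B)
    (hexactA : LinearMap.range (ι : A →ₗ[k] H) =
      quotientSpaceLeft k H (π : H →ₗ[k] B))
    (hcssB : IsCosemisimple k B) (U U' : SimpleComodule k H) (x : SimpleComodQuot k B)
    (h : x ∈ constHat k π U) (h' : x ∈ constHat k π U') :
    constHat k π U' ⊆ constHat k π U := by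
  obtain ⟨X, rfl, hX⟩ := h
  obtain ⟨X', hXX', hX'⟩ := h'
  rw [const_cls hXX'] at hX'
  obtain ⟨g, hg, hgs⟩ := quot_of_const hcssB (cores_comod π U.isComod) X.isSimple hX
  obtain ⟨f, hf0, hf⟩ := hX'
  have hfg := hf.comp' hg
  have hfg0 : f ∘ₗ g ≠ 0 := by
    intro h
    apply hf0
    ext w
    obtain ⟨v, rfl⟩ := hgs w
    exact LinearMap.congr_fun h v
  rintro _ ⟨Y, rfl, hY⟩
  refine ⟨Y, rfl, ?_⟩
  obtain ⟨q, hq, hqs⟩ := quot_of_const hcssB (cores_comod π U'.isComod) Y.isSimple hY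
  obtain ⟨y, hy⟩ := exists_ne_zero Y.isSimple
  obtain ⟨φ, hφ⟩ : ∃ φ : Module.Dual k Y.V, φ y ≠ 0 := by
    by_contra! h
    exact hy ((Module.forall_dual_apply_eq_zero_iff k y).1 h)
  have hγ : φ ∘ₗ q ≠ 0 := by
    intro h
    obtain ⟨v, rfl⟩ := hqs y
    exact hφ (LinearMap.congr_fun h v)
  obtain ⟨f', hf', hne⟩ := key ι π hexactA U.isComod U.isSimple U'.isComod U'.isSimple hfg hfg0
    (φ ∘ₗ q) hγ
  refine const_of_quot hcssB (cores_comod π U.isComod) Y.isSimple (hq.comp' hf') ?_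
  intro h
  apply hne
  rw [LinearMap.comp_assoc, h, LinearMap.comp_zero]

end FinalAux

end QG

open QG in
/-- For an exact sequence `k → A → H → B → k` of cosemisimple
Hopf algebras, `∼_B` is an equivalence relation on `B̂` with finite classes,
and the classes are exactly the sets `const(U)`, `U ∈ Ĥ`. -/
theorem statement_11 (k : Type u) [Field k] [IsAlgClosed k]
    (A H B : Type u) [Ring A] [HopfAlgebra k A] [Ring H] [HopfAlgebra k H]
    [Ring B] [HopfAlgebra k B]
    (ι : A →ₐc[k] H) (π : H →ₐc[k] B)
    (hinj : Function.Injective ι) (hsurj : Function.Surjective π)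
    (hexactA : LinearMap.range (ι : A →ₗ[k] H) =
      quotientSpaceLeft k H (π : H →ₗ[k] B))
    (hexactB : LinearMap.ker (π : H →ₗ[k] B) =
      leftIdealGen k (LinearMap.range (ι : A →ₗ[k] H) ⊓
        LinearMap.ker (Coalgebra.counit (R := k) (A := H))))
    (hcssA : IsCosemisimple k A) (hcssH : IsCosemisimple k H)
    (hcssB : IsCosemisimple k B) :
    Equivalence (relSimB k π) ∧
    (∀ x : SimpleComodQuot k B, {y | relSimB k π x y}.Finite) ∧
    (∀ x : SimpleComodQuot k B, ∃ U : SimpleComodule k H,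
      {y | relSimB k π x y} = constHat k π U) ∧
    (∀ U : SimpleComodule k H, ∃ x : SimpleComodQuot k B,
      {y | relSimB k π x y} = constHat k π U) := by
  have hrefl : ∀ x : SimpleComodQuot k B, ∃ U : SimpleComodule k H, x ∈ constHat k π U := by
    intro x
    obtain ⟨X, rfl⟩ : ∃ X : SimpleComodule k B, X.cls = x := Quot.exists_rep x
    obtain ⟨U, hU⟩ := exists_over π hsurj hcssH hcssB X
    exact ⟨U, X, rfl, hU⟩
  have heq : ∀ (U U' : SimpleComodule k H) (x : SimpleComodQuot k B), x ∈ constHat k π U →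
      x ∈ constHat k π U' → constHat k π U = constHat k π U' := fun U U' x h h' =>
    Set.Subset.antisymm (const_subset ι π hexactA hcssB U' U x h' h)
      (const_subset ι π hexactA hcssB U U' x h h')
  have hclass : ∀ (x : SimpleComodQuot k B) (U : SimpleComodule k H), x ∈ constHat k π U →
      {y | relSimB k π x y} = constHat k π U := by
    intro x U hx
    ext y
    constructor
    · rintro ⟨U', h1, h2⟩
      rw [heq U U' x hx h1]
      exact h2
    · intro hy
      exact ⟨U, hx, hy⟩
  refine ⟨⟨?_, ?_, ?_⟩, ?_, ?_, ?_⟩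
  · intro x
    obtain ⟨U, hU⟩ := hrefl x
    exact ⟨U, hU, hU⟩
  · rintro x y ⟨U, h1, h2⟩
    exact ⟨U, h2, h1⟩
  · rintro x y z ⟨U, h1, h2⟩ ⟨U', h3, h4⟩
    exact ⟨U, h1, (heq U U' y h2 h3) ▸ h4⟩
  · intro x
    obtain ⟨U, hU⟩ := hrefl x
    rw [hclass x U hU]
    exact const_finite π hcssB U
  · intro x
    obtain ⟨U, hU⟩ := hrefl x
    exact ⟨U, hclass x U hU⟩
  · intro U
    obtain ⟨x, hx⟩ := const_nonempty π hcssB U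
    exact ⟨x, hclass x U hx⟩
end
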